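/- arXiv:2203.12492 — 2 statements merged into one kernel-verified Lean document; each statement's English description precedes it below -/
import Mathlib

section
/- Fix integers d ≥ 1, r ≥ 0 and a strict partition λ with d parts such that λ_i ≤ r + 2d − 2i + 1 for all i. Then the number of reduced words of w^λ equals the number of standard Young tableaux of shifted shape λ: |Red(w^λ)| = |SYT(λ)|. -/
open scoped BigOperators

namespace BST

/-- `lam` (1-indexed, with `d` parts) is a strict partition: strictly decreasing
positive parts `lam 1 > lam 2 > ⋯ > lam d > 0`. -/
def IsStrictPartition (d : ℕ) (lam : ℕ → ℕ) : Prop :=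
  (∀ i : ℕ, 1 ≤ i → i < d → lam (i + 1) < lam i) ∧ 1 ≤ lam d

/-- The size `|λ| = λ_1 + ⋯ + λ_d`. -/
def sizeP (d : ℕ) (lam : ℕ → ℕ) : ℕ := ∑ i ∈ Finset.Icc 1 d, lam i

/-- The shifted diagram `D(λ) ⊆ ℤ × ℤ`: row `i` (1 ≤ i ≤ d) occupies columns
`i - d, …, λ_i + i - d - 1`. -/
def Diagram (d : ℕ) (lam : ℕ → ℕ) : Set (ℤ × ℤ) :=
  {p : ℤ × ℤ | 1 ≤ p.1 ∧ p.1 ≤ (d : ℤ) ∧ p.1 - (d : ℤ) ≤ p.2 ∧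
    p.2 + (d : ℤ) + 1 ≤ (lam p.1.toNat : ℤ) + p.1}

/-- The hook `H(i,c)`. -/
def Hook (d : ℕ) (lam : ℕ → ℕ) (i c : ℤ) : Set (ℤ × ℤ) :=
  {(i, c)} ∪ {p ∈ Diagram d lam | (p.1 = i ∧ c < p.2) ∨ (p.2 = c ∧ i < p.1)} ∪
    {p ∈ Diagram d lam | c < 0 ∧ p.1 = (d : ℤ) + 1 + c}

/-- The extended hook `H̃(i,c)`. -/
def ExtHook (d : ℕ) (lam : ℕ → ℕ) (i c : ℤ) : Set (ℤ × ℤ) :=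
  Hook d lam i c ∪ {p : ℤ × ℤ | c < 0 ∧ p = ((d : ℤ) + 1 + c, c)}

/-- The extended diagram `D(λ) ∪ {(i, i - d - 1) : 1 ≤ i ≤ d}`. -/
def ExtDiagram (d : ℕ) (lam : ℕ → ℕ) : Set (ℤ × ℤ) :=
  Diagram d lam ∪ {p : ℤ × ℤ | 1 ≤ p.1 ∧ p.1 ≤ (d : ℤ) ∧ p.2 = p.1 - ((d : ℤ) + 1)}

/-- The extended filling `B̃`, with `B̃(i, i - d - 1) = B(i, 0)`. -/
def ExtFilling (d : ℕ) (B : ℤ × ℤ → ℕ) : ℤ × ℤ → ℕ :=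
  fun p => if p.2 = p.1 - ((d : ℤ) + 1) then B (p.1, 0) else B p

/-- The rank function `rk(i,c)`. -/
def rk (d : ℕ) (lam : ℕ → ℕ) (i c : ℤ) : ℤ :=
  if 0 ≤ c then (lam i.toNat : ℤ) - d + i - c
  else (lam i.toNat : ℤ) - d + i + (lam ((d : ℤ) + 1 + c).toNat : ℤ) + c + 1

/-- A bijective filling of `D(λ)` with `1, …, |λ|` (normalized to be `0` off the diagram). -/
def IsFilling (d : ℕ) (lam : ℕ → ℕ) (B : ℤ × ℤ → ℕ) : Prop :=
  Set.BijOn B (Diagram d lam) (Set.Icc 1 (sizeP d lam)) ∧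
    ∀ p : ℤ × ℤ, p ∉ Diagram d lam → B p = 0

/-- A balanced shifted tableau: a bijective filling such that at each box `(i,c)`,
`B(i,c)` is the `rk(i,c)`-th largest entry of the multiset of values of `B̃` on the
extended hook, i.e. exactly `rk(i,c) - 1` boxes of the extended hook carry a value
strictly larger than `B(i,c)`. -/
def IsBalanced (d : ℕ) (lam : ℕ → ℕ) (B : ℤ × ℤ → ℕ) : Prop :=
  IsFilling d lam B ∧ ∀ p ∈ Diagram d lam,
    ({q ∈ ExtHook d lam p.1 p.2 | B p < ExtFilling d B q}.ncard : ℤ) =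
      rk d lam p.1 p.2 - 1

/-- A standard Young tableau of shifted shape `λ`. -/
def IsSYT (d : ℕ) (lam : ℕ → ℕ) (B : ℤ × ℤ → ℕ) : Prop :=
  IsFilling d lam B ∧ ∀ p ∈ Diagram d lam, ∀ q ∈ Diagram d lam,
    ((p.1 = q.1 ∧ p.2 < q.2) → B p < B q) ∧ ((p.2 = q.2 ∧ p.1 < q.1) → B p < B q)

/-- The simple reflections of `W(B_n)`, acting on `ℤ`: `s 0` swaps `1 ↔ -1`,
and `s a` (for `a ≥ 1`) swaps `a ↔ a+1` and `-a ↔ -(a+1)`. -/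
def sB (a : ℕ) : Equiv.Perm ℤ :=
  if a = 0 then Equiv.swap 1 (-1)
  else Equiv.swap (a : ℤ) ((a : ℤ) + 1) * Equiv.swap (-(a : ℤ)) (-(a : ℤ) - 1)

/-- The product `s_{a_1} s_{a_2} ⋯ s_{a_m}` of a word. -/
def wordProd (L : List ℕ) : Equiv.Perm ℤ := (L.map sB).prod

/-- A signed permutation in `W(B_n)`: odd, and the identity beyond `n`. -/
def IsSignedPerm (n : ℕ) (w : Equiv.Perm ℤ) : Prop :=
  (∀ i : ℤ, w (-i) = -(w i)) ∧ ∀ i : ℤ, (n : ℤ) < |i| → w i = i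

/-- The Coxeter length of `w` in `W(B_n)`. -/
noncomputable def lengthB (n : ℕ) (w : Equiv.Perm ℤ) : ℕ :=
  sInf {m : ℕ | ∃ L : List ℕ, (∀ a ∈ L, a < n) ∧ wordProd L = w ∧ L.length = m}

/-- `L` is a reduced word of `w` in `W(B_n)`. -/
def IsReducedWord (n : ℕ) (w : Equiv.Perm ℤ) (L : List ℕ) : Prop :=
  (∀ a ∈ L, a < n) ∧ wordProd L = w ∧ L.length = lengthB n w

/-- The vector `e_k` (for `k ≥ 1` the `k`-th standard basis vector, with the
conventions `e 0 = 0` and `e (-k) = - e k`), represented as an odd function `ℤ → ℤ`. -/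
def eVec (k : ℤ) : ℤ → ℤ :=
  fun t => if t = 0 then 0 else if t = k then 1 else if t = -k then -1 else 0

/-- The positive roots of type `B_n`. -/
def PosRoots (n : ℕ) : Set (ℤ → ℤ) :=
  {v | (∃ i j : ℤ, 1 ≤ i ∧ i < j ∧ j ≤ (n : ℤ) ∧
        (v = eVec j - eVec i ∨ v = eVec j + eVec i)) ∨
       (∃ i : ℤ, 1 ≤ i ∧ i ≤ (n : ℤ) ∧ v = eVec i)}

/-- The action of a signed permutation on vectors: `w · e_i = e_{w(i)}`. -/
def actB (w : Equiv.Perm ℤ) (v : ℤ → ℤ) : ℤ → ℤ := fun t => v (w⁻¹ t)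

/-- The inversion set `Inv(w) = {α ∈ Φ⁺ : w⁻¹ · α ∈ -Φ⁺}`. -/
def InvSet (n : ℕ) (w : Equiv.Perm ℤ) : Set (ℤ → ℤ) :=
  {α | α ∈ PosRoots n ∧ -(actB w⁻¹ α) ∈ PosRoots n}

/-- The simple roots: `α_0 = e_1` and `α_a = e_{a+1} - e_a` for `a ≥ 1`. -/
def alphaRoot (a : ℕ) : ℤ → ℤ :=
  if a = 0 then eVec 1 else eVec ((a : ℤ) + 1) - eVec (a : ℤ)

/-- The reflection order of a word: `reflOrder L t = γ_{t+1} = s_{a_1} ⋯ s_{a_t} · α_{a_{t+1}}`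
(0-indexed). -/
def reflOrder (L : List ℕ) (t : ℕ) : ℤ → ℤ :=
  actB (wordProd (L.take t)) (alphaRoot (L.getD t 0))

/-- The trapezoid `Z(d,r) = (r+2d-1, r+2d-3, …, r+1)`. -/
def Zlam (d r : ℕ) : ℕ → ℕ := fun i => r + 2 * d + 1 - 2 * i

/-- The labeling `f : D(Z(d,r)) → Φ⁺`. -/
def fLabel (d r : ℕ) (p : ℤ × ℤ) : ℤ → ℤ :=
  if p.2 ≤ 0 then eVec ((d : ℤ) + 1 - p.1) - eVec p.2
  else if p.2 ≤ (r : ℤ) then eVec ((d : ℤ) + 1 - p.1) + eVec (p.2 + (d : ℤ))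
  else eVec ((d : ℤ) + 1 - p.1) - eVec (p.2 - (r : ℤ))

/-- The extended labeling `f̃`, with `f̃(i, i - d - 1) = 2 e_{d+1-i}`. -/
def fExtLabel (d r : ℕ) (p : ℤ × ℤ) : ℤ → ℤ :=
  if p.2 = p.1 - ((d : ℤ) + 1) then (2 : ℤ) • eVec ((d : ℤ) + 1 - p.1)
  else fLabel d r p

/-- `w` is the signed permutation `w^{(d,r)} ∈ W(B_{d+r})`, i.e.
`w(i) = d + i` for `1 ≤ i ≤ r` and `w(i) = -(i - r)` for `r < i ≤ d + r`. -/
def IsWdr (d r : ℕ) (w : Equiv.Perm ℤ) : Prop :=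
  IsSignedPerm (d + r) w ∧
    (∀ i : ℤ, 1 ≤ i → i ≤ (r : ℤ) → w i = (d : ℤ) + i) ∧
    (∀ i : ℤ, (r : ℤ) < i → i ≤ (d : ℤ) + (r : ℤ) → w i = -(i - r))


/-- `x` lies strictly between `y` and `z` (i.e. `min(y,z) < x < max(y,z)`). -/
def Between (x y z : ℕ) : Prop := (y < x ∧ x < z) ∨ (z < x ∧ x < y)

/-- A nonempty list is unimodal: strictly decreasing down to its minimum
(at 0-indexed position `k`), then strictly increasing. -/
def Unimodal (L : List ℕ) : Prop :=
  ∃ k : ℕ, k < L.length ∧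
    (∀ a b : ℕ, a < b → b ≤ k → L.getD b 0 < L.getD a 0) ∧
    (∀ a b : ℕ, k ≤ a → a < b → b < L.length → L.getD a 0 < L.getD b 0)

/-- Row `i` of the distinguished tableau of shape `Z(d,r)`:
`(r+d-i, …, r+1, 0, 1, …, r+d-i)`. -/
def rowWord (d r i : ℕ) : List ℕ :=
  (List.range (r + 2 * (d - i) + 1)).map fun t =>
    if t < d - i then r + (d - i) - t else t - (d - i)

/-- The reading word `π(T) = T_d T_{d-1} ⋯ T_1` of the distinguished tableau of
shape `Z(d,r)`. -/
def piWord (d r : ℕ) : List ℕ :=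
  (List.range d).flatMap fun k => rowWord d r (d - k)

/-- `μ_i = Z(d,r)_i - λ_i`. -/
def muF (d r : ℕ) (lam : ℕ → ℕ) (i : ℕ) : ℕ := r + 2 * d + 1 - 2 * i - lam i

/-- `σ_i = μ_1 + ⋯ + μ_i`. -/
def sigmaF (d r : ℕ) (lam : ℕ → ℕ) (i : ℕ) : ℕ := ∑ t ∈ Finset.Icc 1 i, muF d r lam t

/-- `ν_i = min{μ_i, …, μ_d}`. -/
noncomputable def nuF (d r : ℕ) (lam : ℕ → ℕ) (i : ℕ) : ℕ :=
  sInf {m : ℕ | ∃ j : ℕ, i ≤ j ∧ j ≤ d ∧ m = muF d r lam j}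

/-- The word `a^λ`: the concatenation over `i = 1, …, d` of the increasing runs
`(d+r-i-μ_i+1, …, d+r-i)`. -/
def aLamWord (d r : ℕ) (lam : ℕ → ℕ) : List ℕ :=
  (List.range d).flatMap fun k =>
    (List.range (muF d r lam (k + 1))).map fun t =>
      d + r - (k + 1) - muF d r lam (k + 1) + 1 + t

/-- Row `i` of the tableau `P(w^λ)`: entries `P(i,c) = c` for `c ≥ 0` and
`P(i,c) = r - c - ν_{d+1+c}` for `c < 0`. -/
noncomputable def rowWordP (d r : ℕ) (lam : ℕ → ℕ) (i : ℕ) : List ℕ :=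
  (List.range (lam i)).map fun t =>
    if t < d - i then r + (d - i) - t - nuF d r lam (i + 1 + t) else t - (d - i)

/-- The reading word `π(P(w^λ))`. -/
noncomputable def piWordP (d r : ℕ) (lam : ℕ → ℕ) : List ℕ :=
  (List.range d).flatMap fun k => rowWordP d r lam (d - k)

/-- The shape obtained from `λ` by adding one box at the end of row `i`. -/
def stepShape (lam : ℕ → ℕ) (i : ℕ) : ℕ → ℕ :=
  fun t => if t = i then lam i + 1 else lam t

/-- The box-adding map `f_i` on fillings: swap columns `j = λ_i + i - d` and `j + 1`
(in rows `1, …, i-1`), and put the value `N + 1` in the new box `(i, j)`. -/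
def addBox (d : ℕ) (lam : ℕ → ℕ) (i : ℕ) (N : ℕ) (B : ℤ × ℤ → ℕ) : ℤ × ℤ → ℕ :=
  fun p =>
    if p = ((i : ℤ), (lam i : ℤ) + (i : ℤ) - (d : ℤ)) then N + 1
    else if 1 ≤ p.1 ∧ p.1 < (i : ℤ) ∧ p.2 = (lam i : ℤ) + (i : ℤ) - (d : ℤ) then
      B (p.1, p.2 + 1)
    else if 1 ≤ p.1 ∧ p.1 < (i : ℤ) ∧ p.2 = (lam i : ℤ) + (i : ℤ) - (d : ℤ) + 1 then
      B (p.1, p.2 - 1)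
    else B p

/-- Successively apply the box-adding maps along a list of row indices,
tracking the current shape. -/
def FmapAux (d : ℕ) : List ℕ → (ℕ → ℕ) → (ℤ × ℤ → ℕ) → (ℤ × ℤ → ℕ)
  | [], _, B => B
  | i :: rest, lam, B => FmapAux d rest (stepShape lam i) (addBox d lam i (sizeP d lam) B)

/-- The shape after successively adding boxes along a list of row indices. -/
def shapeAux : List ℕ → (ℕ → ℕ) → (ℕ → ℕ)
  | [], lam => lam
  | i :: rest, lam => shapeAux rest (stepShape lam i)

/-- The list of row indices `1^{μ_1} 2^{μ_2} ⋯ d^{μ_d}` used to pad `λ` to `Z(d,r)`. -/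
def rowsList (d r : ℕ) (lam : ℕ → ℕ) : List ℕ :=
  (List.range d).flatMap fun k => List.replicate (muF d r lam (k + 1)) (k + 1)

/-- `BS(Z(d,r))|_λ`: balanced tableaux of shape `Z(d,r)` such that for each
`i ∈ {1,…,d}` the entries `N + σ_{i-1} + 1, …, N + σ_i` all occur in row `i`. -/
def BSRestricted (d r : ℕ) (lam : ℕ → ℕ) : Set (ℤ × ℤ → ℕ) :=
  {T | IsBalanced d (Zlam d r) T ∧ ∀ i : ℕ, 1 ≤ i → i ≤ d →
    ∀ k : ℕ, sizeP d lam + sigmaF d r lam (i - 1) + 1 ≤ k →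
      k ≤ sizeP d lam + sigmaF d r lam i →
      ∃ c : ℤ, ((i : ℤ), c) ∈ Diagram d (Zlam d r) ∧ T ((i : ℤ), c) = k}

/-- `w ∈ W(B_n)` pattern embeds the signed pattern `v` (given as its one-line
notation, a list of nonzero integers). -/
def PatternEmbeds (n : ℕ) (w : Equiv.Perm ℤ) (v : List ℤ) : Prop :=
  ∃ idx : Fin v.length → ℤ, StrictMono idx ∧
    (∀ j, 1 ≤ idx j ∧ idx j ≤ (n : ℤ)) ∧
    (∀ j, 0 < w (idx j) ↔ 0 < v.get j) ∧
    (∀ j k, |w (idx j)| < |w (idx k)| ↔ |v.get j| < |v.get k|)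


def xk (k : ℕ) : ℤ := if k = 0 then -1 else k
def yk (k : ℕ) : ℤ := (k : ℤ) + 1

def tf (r s x : ℤ) : ℤ :=
  if x = r then s else if x = s then r else if x = -r then -s else if x = -s then -r else x

def tB (r s : ℤ) : Equiv.Perm ℤ :=
  if s = -r then Equiv.swap r s else Equiv.swap r s * Equiv.swap (-r) (-s)

theorem tB_apply {r s : ℤ} (hr : r ≠ 0) (hs : s ≠ 0) (x : ℤ) : tB r s x = tf r s x := by
  unfold tB tf
  split_ifs with h <;> simp only [Equiv.Perm.mul_apply, Equiv.swap_apply_def] <;> grind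

theorem sB_eq (k : ℕ) : sB k = tB (xk k) (yk k) := by
  ext x
  unfold sB tB xk yk
  split_ifs <;> simp only [Equiv.Perm.mul_apply, Equiv.swap_apply_def] <;> grind

theorem xk_ne (k : ℕ) : xk k ≠ 0 := by unfold xk; split_ifs <;> omega
theorem yk_ne (k : ℕ) : yk k ≠ 0 := by unfold yk; omega
theorem xk_lt (k : ℕ) : xk k < yk k := by unfold xk yk; split_ifs <;> omega
theorem sB_apply (k : ℕ) (x : ℤ) : sB k x = tf (xk k) (yk k) x := by
  rw [sB_eq, tB_apply (xk_ne k) (yk_ne k)]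

theorem tB_comm {r s : ℤ} (hr : r ≠ 0) (hs : s ≠ 0) : tB r s = tB s r := by
  ext x
  rw [tB_apply hr hs, tB_apply hs hr]; unfold tf; grind

theorem tf_invol {r s : ℤ} (hr : r ≠ 0) (hs : s ≠ 0) (x : ℤ) : tf r s (tf r s x) = x := by
  unfold tf; grind
theorem tf_neg {r s : ℤ} (hr : r ≠ 0) (hs : s ≠ 0) (x : ℤ) : tf r s (-x) = - tf r s x := by
  unfold tf; grind

theorem tB_mul_self {r s : ℤ} (hr : r ≠ 0) (hs : s ≠ 0) : tB r s * tB r s = 1 := by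
  ext x
  simp [tB_apply hr hs, tf_invol hr hs]
theorem tB_inv {r s : ℤ} (hr : r ≠ 0) (hs : s ≠ 0) : (tB r s)⁻¹ = tB r s :=
  inv_eq_of_mul_eq_one_left (tB_mul_self hr hs)
theorem sB_mul_self (k : ℕ) : sB k * sB k = 1 := by
  rw [sB_eq]; exact tB_mul_self (xk_ne k) (yk_ne k)
theorem sB_inv (k : ℕ) : (sB k)⁻¹ = sB k := inv_eq_of_mul_eq_one_left (sB_mul_self k)
theorem sB_sB (k : ℕ) (x : ℤ) : sB k (sB k x) = x := by
  rw [sB_apply, sB_apply, tf_invol (xk_ne k) (yk_ne k)]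

/-- odd permutations -/
def Odd' (w : Equiv.Perm ℤ) : Prop := ∀ i : ℤ, w (-i) = -(w i)

theorem Odd'.zero {w : Equiv.Perm ℤ} (h : Odd' w) : w 0 = 0 := by
  have := h 0; simp at this; omega
theorem Odd'.inv {w : Equiv.Perm ℤ} (h : Odd' w) (i : ℤ) : w⁻¹ (-i) = -(w⁻¹ i) := by
  apply w.injective; rw [h]; simp
theorem Odd'.sB {w : Equiv.Perm ℤ} (h : Odd' w) (k : ℕ) : Odd' (sB k * w) := by
  intro i; simp [sB_apply, h i, tf_neg (xk_ne k) (yk_ne k)]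
theorem Odd'.tB {w : Equiv.Perm ℤ} (h : Odd' w) {r s : ℤ} (hr : r ≠ 0) (hs : s ≠ 0) :
    Odd' (w * tB r s) := by
  intro i; simp [tB_apply hr hs, tf_neg hr hs, h _]

theorem signed_sB {n : ℕ} {w : Equiv.Perm ℤ} (h : IsSignedPerm n w) {k : ℕ} (hk : k < n) :
    IsSignedPerm n (sB k * w) := by
  refine ⟨Odd'.sB h.1 k, fun i hi => ?_⟩
  simp only [Equiv.Perm.mul_apply, h.2 i hi, sB_apply]
  unfold tf xk yk
  grind
theorem signed_tB {n : ℕ} {w : Equiv.Perm ℤ} (h : IsSignedPerm n w) {r s : ℤ} (hr : r ≠ 0)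
    (hs : s ≠ 0) (hr' : |r| ≤ n) (hs' : |s| ≤ n) : IsSignedPerm n (w * tB r s) := by
  refine ⟨Odd'.tB h.1 hr hs, fun i hi => ?_⟩
  have : tf r s i = i := by unfold tf; grind
  simp only [Equiv.Perm.mul_apply, tB_apply hr hs, this, h.2 i hi]
theorem signed_mono {n N : ℕ} {w : Equiv.Perm ℤ} (h : IsSignedPerm n w) (hN : n ≤ N) :
    IsSignedPerm N w := ⟨h.1, fun i hi => h.2 i (by omega)⟩

/-- left descent -/
def Dk (k : ℕ) (w : Equiv.Perm ℤ) : Prop := w⁻¹ (yk k) < w⁻¹ (xk k)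

def Cov (v : Equiv.Perm ℤ) (i j : ℤ) : Prop :=
  i < j ∧ v i < v j ∧ ∀ q, i < q → q < j → v i < v q → v q < v j → q = 0 ∧ i = -j

theorem Dk_sB (k : ℕ) (w : Equiv.Perm ℤ) : Dk k (sB k * w) ↔ ¬ Dk k w := by
  unfold Dk
  have h1 : sB k (yk k) = xk k := by
    have := xk_lt k
    rw [sB_apply]; unfold tf; grind
  have h2 : sB k (xk k) = yk k := by rw [sB_apply]; unfold tf; grind
  have h3 : w⁻¹ (xk k) ≠ w⁻¹ (yk k) := fun h => absurd (w⁻¹.injective h) (xk_lt k).ne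
  simp only [mul_inv_rev, sB_inv, Equiv.Perm.mul_apply, h1, h2]
  omega

theorem flip_int (k : ℕ) (z z' : ℤ) (h : z < z') (h' : ¬ tf (xk k) (yk k) z < tf (xk k) (yk k) z') :
    (z = xk k ∧ z' = yk k) ∨ (z = -yk k ∧ z' = -xk k) ∨
      (k = 0 ∧ ((z = -1 ∧ z' = 0) ∨ (z = 0 ∧ z' = 1))) := by
  unfold tf xk yk at *
  by_cases hk0 : k = 0
  · subst hk0
    grind (splits := 30)
  · have hk1 : 1 ≤ (k : ℤ) := by omega
    simp only [hk0, if_false] at *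
    grind (splits := 30)

set_option linter.unusedSectionVars false
section core
variable {u : Equiv.Perm ℤ} (hu : Odd' u) {k : ℕ} (hk : ¬ Dk k u)
include hu hk

theorem flip_pos {p q : ℤ} (h : u p < u q) (h' : ¬ sB k (u p) < sB k (u q)) :
    (p = u⁻¹ (xk k) ∧ q = u⁻¹ (yk k)) ∨ (p = -u⁻¹ (yk k) ∧ q = - u⁻¹ (xk k)) ∨
      (k = 0 ∧ ((p = u⁻¹ (xk k) ∧ q = 0) ∨ (p = 0 ∧ q = u⁻¹ (yk k)))) := by
  rw [sB_apply, sB_apply] at h'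
  have e : ∀ p z, u p = z → p = u⁻¹ z := by rintro p z rfl; simp
  have e0 : ∀ p, u p = 0 → p = 0 := by
    intro p hp; apply u.injective; rw [hp, hu.zero]
  rcases flip_int k _ _ h h' with ⟨h1, h2⟩ | ⟨h1, h2⟩ | ⟨h0, h1 | h1⟩
  · exact Or.inl ⟨e _ _ h1, e _ _ h2⟩
  · refine Or.inr (Or.inl ⟨?_, ?_⟩)
    · rw [e _ _ h1, hu.inv]
    · rw [e _ _ h2, hu.inv]
  · exact Or.inr (Or.inr ⟨h0, Or.inl ⟨e _ _ (by subst h0; simpa [xk] using h1.1), e0 _ h1.2⟩⟩)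
  · exact Or.inr (Or.inr ⟨h0, Or.inr ⟨e0 _ h1.1, e _ _ (by subst h0; simpa [yk] using h1.2)⟩⟩)

theorem ab_lt : u⁻¹ (xk k) < u⁻¹ (yk k) := by
  have h3 : u⁻¹ (xk k) ≠ u⁻¹ (yk k) := fun h => absurd (u⁻¹.injective h) (xk_lt k).ne
  unfold Dk at hk; omega

theorem ab_zero (h0 : k = 0) : u⁻¹ (xk k) = - u⁻¹ (yk k) := by
  subst h0; rw [← hu.inv]; simp [xk, yk]

theorem NI {p q : ℤ} (hpq : p < q) (h : sB k (u p) < sB k (u q)) : u p < u q := by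
  by_contra hc
  have hne : u q ≠ u p := fun h => absurd (u.injective h) hpq.ne'
  have h1 : u q < u p := by omega
  have hab := ab_lt hu hk
  have h2 := flip_pos hu hk h1 (by omega)
  have h3 := ab_zero hu hk
  grind

theorem L1 {r s : ℤ} (hr : r ≠ 0) (hs : s ≠ 0) (h : Cov u r s)
    (h1 : ¬ (r = u⁻¹ (xk k) ∧ s = u⁻¹ (yk k))) (h2 : ¬ (r = -u⁻¹ (yk k) ∧ s = - u⁻¹ (xk k))) :
    tf r s (u⁻¹ (xk k)) < tf r s (u⁻¹ (yk k)) := by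
  have hab := ab_lt hu hk
  have h3 := ab_zero hu hk
  have ha : u (u⁻¹ (xk k)) = xk k := by simp
  have hb : u (u⁻¹ (yk k)) = yk k := by simp
  obtain ⟨hrs, hv, hm⟩ := h
  generalize u⁻¹ (xk k) = a at *
  generalize u⁻¹ (yk k) = b at *
  have hna := hu a
  have hnb := hu b
  have hnr := hu r
  have hns := hu s
  have h0 := hu.zero
  have ma := hm a
  have mb := hm b
  have mna := hm (-a)
  have mnb := hm (-b)
  have m0 := hm 0
  have hinj : ∀ p q, u p = u q → p = q := fun p q h => u.injective h
  have i1 := hinj r a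
  have i2 := hinj r b
  have i3 := hinj s a
  have i4 := hinj s b
  have i5 := hinj r (-a)
  have i6 := hinj r (-b)
  have i7 := hinj s (-a)
  have i8 := hinj s (-b)
  have i9 := hinj r 0
  have i10 := hinj s 0
  clear hinj hm hu hk
  unfold tf xk yk at *
  by_cases hk0 : k = 0
  · subst hk0
    simp only [if_true] at *
    grind (splits := 40)
  · have hk1 : 1 ≤ (k : ℤ) := by omega
    simp only [hk0, if_false] at *
    grind (splits := 40)

theorem L2 {r s : ℤ} (hr : r ≠ 0) (hs : s ≠ 0) (h : Cov u r s)
    (h1 : ¬ (r = u⁻¹ (xk k) ∧ s = u⁻¹ (yk k))) (h2 : ¬ (r = -u⁻¹ (yk k) ∧ s = - u⁻¹ (xk k))) :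
    Cov (sB k * u) r s := by
  obtain ⟨hrs, hv, hm⟩ := h
  refine ⟨hrs, ?_, fun q q1 q2 q3 q4 => hm q q1 q2 (NI hu hk q1 q3) (NI hu hk q2 q4)⟩
  by_contra hc
  have := flip_pos hu hk hv hc
  grind

theorem L3 {r s : ℤ} (hr : r ≠ 0) (hs : s ≠ 0) (h : Cov (sB k * u) r s)
    (h1 : tf r s (u⁻¹ (xk k)) < tf r s (u⁻¹ (yk k))) :
    Cov u r s := by
  obtain ⟨hrs, hv, hm⟩ := h
  simp only [Equiv.Perm.mul_apply] at hv hm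
  refine ⟨hrs, NI hu hk hrs hv, fun q q1 q2 q3 q4 => ?_⟩
  by_contra hc
  have hm' := hm q q1 q2
  have hab := ab_lt hu hk
  have h3 := ab_zero hu hk
  have ha : u (u⁻¹ (xk k)) = xk k := by simp
  have hb : u (u⁻¹ (yk k)) = yk k := by simp
  have f1 := flip_pos hu hk q3
  have f2 := flip_pos hu hk q4
  have f3 := NI hu hk hrs hv
  simp only [sB_apply] at *
  generalize u⁻¹ (xk k) = a at *
  generalize u⁻¹ (yk k) = b at *
  have hna := hu a
  have hnb := hu b
  have hnr := hu r
  have hns := hu s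
  have h0 := hu.zero
  have hinj : ∀ p q, u p = u q → p = q := fun p q h => u.injective h
  have i1 := hinj r a
  have i2 := hinj r b
  have i3 := hinj s a
  have i4 := hinj s b
  have i5 := hinj r (-a)
  have i6 := hinj r (-b)
  have i7 := hinj s (-a)
  have i8 := hinj s (-b)
  have m0 := hm 0
  clear hinj hm hu hk
  unfold tf xk yk at *
  by_cases hk0 : k = 0
  · subst hk0
    simp only [if_true] at *
    grind (splits := 40)
  · have hk1 : 1 ≤ (k : ℤ) := by omega
    simp only [hk0, if_false] at *
    grind (splits := 40)
end core


theorem tf_conj {w : Equiv.Perm ℤ} (h : Odd' w) (r s z : ℤ) :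
    w (tf r s z) = tf (w r) (w s) (w z) := by
  unfold tf
  have e : ∀ p q, w p = w q ↔ p = q := fun p q => w.injective.eq_iff
  simp only [← h _, e]
  split_ifs <;> rfl

theorem eqc {w : Equiv.Perm ℤ} (h : Odd' w) {r s : ℤ} (hr : r ≠ 0) (hs : s ≠ 0) (hrs : r ≠ s) (k : ℕ) :
    w * tB r s = sB k * w ↔
      (w r = xk k ∧ w s = yk k) ∨ (w r = yk k ∧ w s = xk k) ∨
      (w r = - xk k ∧ w s = - yk k) ∨ (w r = - yk k ∧ w s = - xk k) := by
  have hlt := xk_lt k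
  have hx := xk_ne k
  have hy := yk_ne k
  constructor
  · intro he
    have h1 := congrArg (fun p : Equiv.Perm ℤ => p r) he
    simp only [Equiv.Perm.mul_apply, tB_apply hr hs, sB_apply] at h1
    have h2 : tf r s r = s := by unfold tf; simp
    rw [h2] at h1
    have h3 : w r ≠ w s := fun h => hrs (w.injective h)
    unfold tf at h1
    grind
  · intro he
    ext z
    simp only [Equiv.Perm.mul_apply, tB_apply hr hs, sB_apply, tf_conj h]
    rcases he with ⟨h1, h2⟩ | ⟨h1, h2⟩ | ⟨h1, h2⟩ | ⟨h1, h2⟩ <;> rw [h1, h2] <;> unfold tf <;> grind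

theorem Dk_tB {w : Equiv.Perm ℤ} {r s : ℤ} (hr : r ≠ 0) (hs : s ≠ 0) (k : ℕ) :
    Dk k (w * tB r s) ↔ tf r s (w⁻¹ (yk k)) < tf r s (w⁻¹ (xk k)) := by
  unfold Dk
  simp [mul_inv_rev, tB_inv hr hs, tB_apply hr hs]

theorem claim1 {w : Equiv.Perm ℤ} (h : Odd' w) {r s : ℤ} (hr : r ≠ 0) (hs : s ≠ 0) (hrs : r ≠ s)
    (k : ℕ) (hne : w * tB r s ≠ sB k * w) :
    (Dk k w ∧ Cov (sB k * w) r s) ↔ (Cov w r s ∧ Dk k (w * tB r s)) := by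
  rw [Ne, eqc h hr hs hrs] at hne
  have hss : sB k * (sB k * w) = w := by rw [← mul_assoc, sB_mul_self, one_mul]
  have hwinv : ∀ z, w (w⁻¹ z) = z := by intro z; simp
  have hnx := h (w⁻¹ (xk k))
  have hny := h (w⁻¹ (yk k))
  have n1 : ¬ (r = w⁻¹ (xk k) ∧ s = w⁻¹ (yk k)) := by
    rintro ⟨rfl, rfl⟩; simp at hne
  have n2 : ¬ (r = -w⁻¹ (yk k) ∧ s = -w⁻¹ (xk k)) := by
    rintro ⟨rfl, rfl⟩; rw [hnx, hny] at hne; simp at hne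
  have n3 : ¬ (r = w⁻¹ (yk k) ∧ s = w⁻¹ (xk k)) := by
    rintro ⟨rfl, rfl⟩; simp at hne
  have n4 : ¬ (r = -w⁻¹ (xk k) ∧ s = -w⁻¹ (yk k)) := by
    rintro ⟨rfl, rfl⟩; rw [hnx, hny] at hne; simp at hne
  have h1 : sB k (yk k) = xk k := by
    have := xk_lt k
    rw [sB_apply]; unfold tf; grind
  have h2 : sB k (xk k) = yk k := by rw [sB_apply]; unfold tf; grind
  have ix : (sB k * w)⁻¹ (xk k) = w⁻¹ (yk k) := by simp [mul_inv_rev, sB_inv, h2]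
  have iy : (sB k * w)⁻¹ (yk k) = w⁻¹ (xk k) := by simp [mul_inv_rev, sB_inv, h1]
  rw [Dk_tB hr hs]
  constructor
  · rintro ⟨hD, hC⟩
    have hk : ¬ Dk k (sB k * w) := by rw [Dk_sB]; simpa using hD
    have hu := h.sB k
    have := L1 hu hk hr hs hC (by rwa [ix, iy]) (by rwa [ix, iy])
    rw [ix, iy] at this
    have h5 := L2 hu hk hr hs hC (by rwa [ix, iy]) (by rwa [ix, iy])
    rw [hss] at h5
    exact ⟨h5, this⟩
  · rintro ⟨hC, hD⟩
    have hDw : Dk k w := by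
      by_contra hk
      have := L1 h hk hr hs hC n1 n2
      omega
    refine ⟨hDw, ?_⟩
    have hk : ¬ Dk k (sB k * w) := by rw [Dk_sB]; simpa using hDw
    have hu := h.sB k
    apply L3 hu hk hr hs (by rwa [hss])
    rwa [ix, iy]

def Cv (w : Equiv.Perm ℤ) (r s : ℤ) : Prop := if r < s then Cov w r s else Cov w s r
def eps (r s : ℤ) : ℤ := if r < s then 1 else -1

theorem claim1' {w : Equiv.Perm ℤ} (h : Odd' w) {r s : ℤ} (hr : r ≠ 0) (hs : s ≠ 0) (hrs : r ≠ s)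
    (k : ℕ) (hne : w * tB r s ≠ sB k * w) :
    (Dk k w ∧ Cv (sB k * w) r s) ↔ (Cv w r s ∧ Dk k (w * tB r s)) := by
  unfold Cv
  split_ifs
  · exact claim1 h hr hs hrs k hne
  · rw [tB_comm hr hs] at *
    exact claim1 h hs hr hrs.symm k hne

/-- covers at adjacent values -/
theorem adj_cov {u : Equiv.Perm ℤ} (h : Odd' u) {r s : ℤ} (hr : r ≠ 0) (hs : s ≠ 0)
    (hrs : r < s) (k : ℕ) (hk : ¬ Dk k u) (he : u * tB r s = sB k * u) : Cov u r s := by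
  rw [eqc h hr hs hrs.ne] at he
  have e : ∀ p z, u p = z → u⁻¹ z = p := by rintro p z rfl; simp
  have hlt := xk_lt k
  unfold Dk at hk
  have key : (u r = xk k ∧ u s = yk k) ∨ (u r = - yk k ∧ u s = - xk k) := by
    rcases he with ⟨h1, h2⟩ | ⟨h1, h2⟩ | ⟨h1, h2⟩ | ⟨h1, h2⟩
    · exact Or.inl ⟨h1, h2⟩
    · rw [e _ _ h1, e _ _ h2] at hk; omega
    · have h1' := e _ _ h1
      have h2' := e _ _ h2
      rw [h.inv] at h1' h2'
      omega
    · exact Or.inr ⟨h1, h2⟩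
  have hz : ∀ p, u p = 0 → p = 0 := by
    intro p hp; apply u.injective; rw [hp, h.zero]
  refine ⟨hrs, by omega, fun q q1 q2 q3 q4 => ?_⟩
  have : k = 0 ∧ u q = 0 := by unfold xk yk at *; split_ifs at * <;> omega
  refine ⟨hz q this.2, u.injective ?_⟩
  rw [h s]
  obtain ⟨rfl, _⟩ := this
  simp [xk, yk] at key
  omega

theorem claim2 {w : Equiv.Perm ℤ} (h : Odd' w) {r s : ℤ} (hr : r ≠ 0) (hs : s ≠ 0) (hrs : r ≠ s)
    (k : ℕ) (he : w * tB r s = sB k * w) :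
    (Dk k w → Cv (sB k * w) r s ∧ ¬ Cv w r s) ∧ (¬ Dk k w → Cv w r s ∧ Dk k (w * tB r s)) := by
  have hss : sB k * (sB k * w) = w := by rw [← mul_assoc, sB_mul_self, one_mul]
  have key : ∀ u : Equiv.Perm ℤ, Odd' u → u * tB r s = sB k * u → ¬ Dk k u → Cv u r s := by
    intro u hu hue hk
    unfold Cv
    split_ifs with h1
    · exact adj_cov hu hr hs h1 k hk hue
    · rw [tB_comm hr hs] at hue
      exact adj_cov hu hs hr (by omega) k hk hue
  constructor
  · intro hD
    have h1 : Cv (sB k * w) r s := key _ (h.sB k) (by rw [mul_assoc, he]) (by rw [Dk_sB]; simpa using hD)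
    refine ⟨h1, ?_⟩
    rw [← he] at h1
    have e1 : (w * tB r s) r = w s := by simp [tB_apply hr hs, tf]
    have e2 : (w * tB r s) s = w r := by simp [tB_apply hr hs, tf]
    unfold Cv Cov at *
    rw [e1, e2] at h1
    split_ifs at * <;> omega
  · intro hD
    refine ⟨key w h he hD, ?_⟩
    rw [he, Dk_sB]; exact hD

open Classical in
noncomputable def R (N : ℕ) : ℕ → Equiv.Perm ℤ → ℤ
  | 0, w => if w = 1 then 1 else 0
  | m + 1, w => ∑ k ∈ Finset.range N, if Dk k w then R N m (sB k * w) else 0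

theorem signed_inv {n : ℕ} {w : Equiv.Perm ℤ} (h : IsSignedPerm n w) {i : ℤ} (hi : (n : ℤ) < |i|) :
    w⁻¹ i = i := by
  have := h.2 i hi
  apply w.injective; rw [this]; simp

theorem inv_self' (w : Equiv.Perm ℤ) (x : ℤ) : w⁻¹ (w x) = x := by simp
theorem self_inv' (w : Equiv.Perm ℤ) (x : ℤ) : w (w⁻¹ x) = x := by simp
theorem signed_abs {n : ℕ} {w : Equiv.Perm ℤ} (h : IsSignedPerm n w) {i : ℤ} (hi : |i| ≤ (n : ℤ)) :
    |w i| ≤ n := by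
  by_contra hc
  have := signed_inv h (i := w i) (by omega)
  rw [inv_self'] at this
  rw [← this] at hc
  exact hc hi
theorem signed_inv_abs {n : ℕ} {w : Equiv.Perm ℤ} (h : IsSignedPerm n w) {i : ℤ} (hi : |i| ≤ (n : ℤ)) :
    |w⁻¹ i| ≤ n := by
  by_contra hc
  have := h.2 (w⁻¹ i) (by omega)
  rw [self_inv'] at this
  rw [← this] at hc
  exact hc hi

theorem not_Dk {n : ℕ} {w : Equiv.Perm ℤ} (h : IsSignedPerm n w) {k : ℕ} (hk : n ≤ k) : ¬ Dk k w := by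
  unfold Dk
  have hy : w⁻¹ (yk k) = yk k := signed_inv h (by unfold yk; rw [abs_of_nonneg] <;> omega)
  rw [hy]
  by_cases hk0 : k = 0
  · subst hk0
    have h3 : w⁻¹ (xk 0) = xk 0 := signed_inv h (by unfold xk; simp; omega)
    rw [h3]; have := xk_lt 0; omega
  · have : |w⁻¹ (xk k)| ≤ k := 
      signed_inv_abs (signed_mono h hk) (by unfold xk; simp [hk0])
    unfold yk; rw [abs_le] at this; omega

open Classical in
theorem R_stable {n N : ℕ} (hN : n ≤ N) (m : ℕ) : ∀ {w : Equiv.Perm ℤ}, IsSignedPerm n w →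
    R n m w = R N m w := by
  induction m with
  | zero => intro w h; rfl
  | succ m ih =>
    intro w h
    simp only [R]
    have : ∀ k ∈ Finset.range n, (if Dk k w then R n m (sB k * w) else 0) =
        (if Dk k w then R N m (sB k * w) else 0) := by
      intro k hk
      rw [ih (signed_sB h (Finset.mem_range.1 hk))]
    rw [Finset.sum_congr rfl this]
    apply Finset.sum_subset (Finset.range_mono hN)
    intro k _ hk
    rw [if_neg (not_Dk h (by simpa using hk))]

noncomputable def Ss (n : ℕ) (r : ℤ) : Finset ℤ :=
  (Finset.Icc (-((n : ℤ) + 1)) (n + 1)).filter (fun s => s ≠ 0 ∧ s ≠ r)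

theorem mem_Ss {n : ℕ} {r s : ℤ} : s ∈ Ss n r ↔ |s| ≤ n + 1 ∧ s ≠ 0 ∧ s ≠ r := by
  unfold Ss; simp [abs_le]

open Classical in
theorem diag_sum {n : ℕ} {w : Equiv.Perm ℤ} (h : IsSignedPerm n w) {r : ℤ} (hr : r ≠ 0)
    (hrn : |r| ≤ n) :
    ∑ k ∈ Finset.range (n + 1), ∑ s ∈ Ss n r,
      (if w * tB r s = sB k * w then eps r s * (if Dk k w then 1 else -1) else 0) = 0 := by
  have ho : Odd' w := h.1
  have hz0 : w r ≠ 0 := fun hc => hr (w.injective (by rw [hc, ho.zero]))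
  have hzn : |w r| ≤ n := signed_abs h hrn
  obtain ⟨z, hz⟩ : ∃ z, w r = z := ⟨_, rfl⟩
  rw [hz] at hz0 hzn
  rw [abs_le] at hzn
  have hinv : ∀ p y, w p = y ↔ p = w⁻¹ y := by
    intro p y; constructor
    · rintro rfl; simp
    · rintro rfl; simp
  obtain ⟨zU, hzU⟩ : ∃ zU : ℤ, zU = if z = -1 then 1 else z + 1 := ⟨_, rfl⟩
  obtain ⟨zD, hzD⟩ : ∃ zD : ℤ, zD = if z = 1 then -1 else z - 1 := ⟨_, rfl⟩
  obtain ⟨kU, hkU⟩ : ∃ k : ℕ, (k : ℤ) = if 0 < z then z else -z - 1 :=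
    ⟨(if 0 < z then z else -z - 1).toNat, by split_ifs <;> omega⟩
  obtain ⟨kD, hkD⟩ : ∃ k : ℕ, (k : ℤ) = if 0 < z then z - 1 else -z :=
    ⟨(if 0 < z then z - 1 else -z).toNat, by split_ifs <;> omega⟩
  have term : ∀ k ∈ Finset.range (n + 1), ∀ s ∈ Ss n r,
      (if w * tB r s = sB k * w then eps r s * (if Dk k w then 1 else -1) else 0) =
      (if k = kU then (if s = w⁻¹ zU then (-1 : ℤ) else 0) else 0) +
      (if k = kD then (if s = w⁻¹ zD then (1 : ℤ) else 0) else 0) := by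
    intro k hk s hs
    rw [mem_Ss] at hs
    obtain ⟨hs1, hs0, hsr⟩ := hs
    have he := eqc ho hr hs0 hsr.symm k
    have hys : ∀ y, (s = w⁻¹ y) ↔ w s = y := fun y => (hinv s y).symm
    simp only [hys]
    have hys0 : w s ≠ 0 := fun hc => hs0 (w.injective (by rw [hc, ho.zero]))
    by_cases hd : w * tB r s = sB k * w
    · rw [if_pos hd]
      rw [he] at hd
      have hDk : Dk k w ↔ (if (w r = xk k ∧ w s = yk k) ∨ (w r = - yk k ∧ w s = - xk k) then s < r else r < s) := by
        unfold Dk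
        have hlt := xk_lt k
        rcases hd with ⟨h1, h2⟩ | ⟨h1, h2⟩ | ⟨h1, h2⟩ | ⟨h1, h2⟩
        · rw [if_pos (Or.inl ⟨h1, h2⟩)]
          rw [hinv] at h1 h2; rw [← h1, ← h2]
        · rw [if_neg (by omega)]
          rw [hinv] at h1 h2; rw [← h1, ← h2]
        · rw [if_neg (by unfold xk yk at *; split_ifs at * <;> omega)]
          rw [hinv, ho.inv] at h1 h2; omega
        · rw [if_pos (Or.inr ⟨h1, h2⟩)]
          rw [hinv, ho.inv] at h1 h2; omega
      rw [hz] at hd hDk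
      simp only [hDk, eps]
      generalize w s = y at *
      have hyk : yk k = k + 1 := rfl
      by_cases hk0 : k = 0
      · subst hk0
        have hxk : xk 0 = -1 := rfl
        clear he hys hinv hz h ho
        rw [hxk, hyk] at hd
        rw [hxk, hyk]
        clear hDk
        grind (splits := 30)
      · have hxk : xk k = k := by simp [xk, hk0]
        clear he hys hinv hz h ho
        rw [hxk, hyk] at hd
        rw [hxk, hyk]
        clear hDk
        grind (splits := 30)
    · rw [if_neg hd]
      rw [he, hz] at hd
      generalize w s = y at *
      have hyk : yk k = k + 1 := rfl
      by_cases hk0 : k = 0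
      · subst hk0
        have hxk : xk 0 = -1 := rfl
        clear he hys hinv hz h ho
        rw [hxk, hyk] at hd
        grind (splits := 30)
      · have hxk : xk k = k := by simp [xk, hk0]
        clear he hys hinv hz h ho
        rw [hxk, hyk] at hd
        grind (splits := 30)
  rw [Finset.sum_congr rfl (fun k hk => Finset.sum_congr rfl (term k hk))]
  simp only [Finset.sum_add_distrib]
  have hU : w⁻¹ zU ∈ Ss n r := by
    rw [mem_Ss]
    refine ⟨?_, ?_, ?_⟩
    · have := signed_inv_abs (signed_mono h (Nat.le_succ n)) (i := zU) (by rw [abs_le]; push_cast; grind)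
      push_cast at this; exact this
    · intro hc
      have := (hinv 0 zU).2 hc.symm
      rw [ho.zero] at this; grind
    · intro hc
      have := (hinv r zU).2 hc.symm
      grind
  have hD : w⁻¹ zD ∈ Ss n r := by
    rw [mem_Ss]
    refine ⟨?_, ?_, ?_⟩
    · have := signed_inv_abs (signed_mono h (Nat.le_succ n)) (i := zD) (by rw [abs_le]; push_cast; grind)
      push_cast at this; exact this
    · intro hc
      have := (hinv 0 zD).2 hc.symm
      rw [ho.zero] at this; grind
    · intro hc
      have := (hinv r zD).2 hc.symm
      grind
  have e1 : ∀ (c : ℤ) (k0 : ℕ) (s0 : ℤ), k0 ∈ Finset.range (n + 1) → s0 ∈ Ss n r → 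
      ∑ k ∈ Finset.range (n + 1), ∑ s ∈ Ss n r,
       (if k = k0 then (if s = s0 then c else 0) else 0) = c := by
    intro c k0 s0 h1 h2
    rw [Finset.sum_eq_single k0]
    · simp only [if_true]
      rw [Finset.sum_ite_eq' (Ss n r) s0 (fun _ => c), if_pos h2]
    · intro b _ hb
      simp [hb]
    · intro hc; exact absurd h1 hc
  rw [e1 _ _ _ (by rw [Finset.mem_range]; grind) hU, e1 _ _ _ (by rw [Finset.mem_range]; grind) hD]
  norm_num

open Classical in
noncomputable def T (n : ℕ) (r : ℤ) (m : ℕ) (w : Equiv.Perm ℤ) : ℤ :=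
  ∑ s ∈ Ss n r, if Cv w r s then eps r s * R (n + 1) m (w * tB r s) else 0

open Classical in
theorem T_succ {n : ℕ} {w : Equiv.Perm ℤ} (h : IsSignedPerm n w) {r : ℤ} (hr : r ≠ 0)
    (hrn : |r| ≤ n) (m : ℕ) :
    T n r (m + 1) w = ∑ k ∈ Finset.range (n + 1), if Dk k w then T n r m (sB k * w) else 0 := by
  have ho : Odd' w := h.1
  have hd := diag_sum h hr hrn
  have e1 : T n r (m + 1) w = ∑ k ∈ Finset.range (n + 1), ∑ s ∈ Ss n r,
      if Cv w r s ∧ Dk k (w * tB r s) then eps r s * R (n + 1) m (sB k * (w * tB r s)) else 0 := by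
    unfold T
    rw [Finset.sum_comm]
    apply Finset.sum_congr rfl
    intro s _
    by_cases hc : Cv w r s
    · simp only [hc, if_true, true_and, R, Finset.mul_sum, mul_ite, mul_zero]
    · simp [hc]
  have e2 : (∑ k ∈ Finset.range (n + 1), if Dk k w then T n r m (sB k * w) else 0) = 
      ∑ k ∈ Finset.range (n + 1), ∑ s ∈ Ss n r,
      if Dk k w ∧ Cv (sB k * w) r s then eps r s * R (n + 1) m (sB k * (w * tB r s)) else 0 := by
    apply Finset.sum_congr rfl
    intro k _
    unfold T
    by_cases hc : Dk k w
    · simp only [hc, if_true, true_and, mul_assoc]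
    · simp [hc]
  rw [e1, e2, ← sub_eq_zero, ← Finset.sum_sub_distrib]
  refine Eq.trans ?_ ((congrArg (fun x => -R (n + 1) m w * x) hd).trans (mul_zero _))
  rw [Finset.mul_sum]
  apply Finset.sum_congr rfl
  intro k _
  rw [← Finset.sum_sub_distrib, Finset.mul_sum]
  apply Finset.sum_congr rfl
  intro s hs
  rw [mem_Ss] at hs
  obtain ⟨hs1, hs0, hsr⟩ := hs
  by_cases he : w * tB r s = sB k * w
  · have c2 := claim2 ho hr hs0 hsr.symm k he
    have hss : sB k * (w * tB r s) = w := by rw [he, ← mul_assoc, sB_mul_self, one_mul]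
    rw [hss, if_pos he]
    by_cases hD : Dk k w
    · have := c2.1 hD
      rw [if_neg (fun hh => this.2 hh.1), if_pos ⟨hD, this.1⟩, if_pos hD]; ring
    · have := c2.2 hD
      rw [if_pos this, if_neg (fun hh => hD hh.1), if_neg hD]; ring
  · have c1 := claim1' ho hr hs0 hsr.symm k he
    rw [if_neg he]
    simp only [c1, sub_self, mul_zero]

theorem transition {n : ℕ} {r : ℤ} (hr : r ≠ 0) (hrn : |r| ≤ n) (m : ℕ) : 
    ∀ {w : Equiv.Perm ℤ}, IsSignedPerm n w → T n r m w = 0 := by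
  classical
  induction m with
  | zero =>
    intro w h
    unfold T
    apply Finset.sum_eq_zero
    intro s hs
    rw [mem_Ss] at hs
    obtain ⟨hs1, hs0, hsr⟩ := hs
    split_ifs with hc
    · simp only [R]
      rw [if_neg, mul_zero]
      intro he
      have e1 : w r = s := by
        have : (w * tB r s) s = s := by rw [he]; rfl
        simpa [tB_apply hr hs0, tf, hsr] using this
      have e2 : w s = r := by
        have : (w * tB r s) r = r := by rw [he]; rfl
        simpa [tB_apply hr hs0, tf, hsr] using this
      unfold Cv Cov at hc
      rw [e1, e2] at hc
      split_ifs at hc <;> omega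
    · rfl
  | succ m ih =>
    intro w h
    rw [T_succ h hr hrn]
    apply Finset.sum_eq_zero
    intro k _
    split_ifs with hD
    · refine ih (signed_sB h ?_)
      by_contra hc
      exact not_Dk h (by omega) hD
    · rfl


open Classical in
noncomputable def Inv' (n : ℕ) (w : Equiv.Perm ℤ) : Finset (ℤ × ℤ) :=
  ((Finset.Icc (-(n : ℤ)) n) ×ˢ (Finset.Icc (-(n : ℤ)) n)).filter
    (fun p => p.1 ≠ 0 ∧ p.2 ≠ 0 ∧ p.1 < p.2 ∧ 0 ≤ p.1 + p.2 ∧ w p.2 < w p.1)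

theorem mem_Inv' {n : ℕ} {w : Equiv.Perm ℤ} {i j : ℤ} : (i, j) ∈ Inv' n w ↔
    ((-(n : ℤ) ≤ i ∧ i ≤ n) ∧ (-(n : ℤ) ≤ j ∧ j ≤ n)) ∧ i ≠ 0 ∧ j ≠ 0 ∧ i < j ∧ 0 ≤ i + j ∧ w j < w i := by
  unfold Inv'; simp

noncomputable def fI (n : ℕ) (w : Equiv.Perm ℤ) : ℕ := (Inv' n w).card

theorem fI_up {n : ℕ} {w : Equiv.Perm ℤ} (h : IsSignedPerm n w) {k : ℕ} (hkn : k < n) (hk : ¬ Dk k w) :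
    fI n (sB k * w) = fI n w + 1 := by
  classical
  have ho : Odd' w := h.1
  have hab := ab_lt ho hk
  have h3 := ab_zero ho hk
  have ha : w (w⁻¹ (xk k)) = xk k := by simp
  have hb : w (w⁻¹ (yk k)) = yk k := by simp
  have hA : |w⁻¹ (xk k)| ≤ n := signed_inv_abs h (by unfold xk; rw [abs_le]; split_ifs <;> omega)
  have hB : |w⁻¹ (yk k)| ≤ n := signed_inv_abs h (by unfold yk; rw [abs_le]; omega)
  have hfl : ∀ p q, w p < w q → ¬ sB k (w p) < sB k (w q) → _ := fun p q => flip_pos ho hk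
  have hNI : ∀ p q, p < q → sB k (w p) < sB k (w q) → w p < w q := fun p q => NI ho hk
  have hxy := xk_lt k
  have s1 : sB k (yk k) = xk k := by
    rw [sB_apply]; unfold tf; grind
  have s2 : sB k (xk k) = yk k := by rw [sB_apply]; unfold tf; grind
  have hx0 := xk_ne k
  have hy0 := yk_ne k
  have hw0 := ho.zero
  have hsodd : ∀ x, sB k (-x) = - sB k x := by
    intro x; rw [sB_apply, sB_apply, tf_neg hx0 hy0]
  generalize w⁻¹ (xk k) = a at *
  generalize w⁻¹ (yk k) = b at *
  have ha0 : a ≠ 0 := by rintro rfl; omega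
  have hb0 : b ≠ 0 := by rintro rfl; omega
  rw [abs_le] at hA hB
  have hsi : ∀ x y, sB k x = sB k y → x = y := fun x y h => (sB k).injective h
  have hwi : ∀ x y, w x = w y → x = y := fun x y h => w.injective h
  have key : Inv' n (sB k * w) = insert (if 0 ≤ a + b then (a, b) else (-b, -a)) (Inv' n w) := by
    ext ⟨i, j⟩
    rw [Finset.mem_insert, mem_Inv', mem_Inv']
    simp only [Equiv.Perm.mul_apply]
    constructor
    · rintro ⟨h1, h2, h4, h5, h6, h7⟩
      by_cases hc : w j < w i
      · exact Or.inr ⟨h1, h2, h4, h5, h6, hc⟩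
      · left
        have h8 := hwi i j
        have := hfl i j (by omega) (by omega)
        split_ifs <;> rw [Prod.mk.injEq] <;> omega
    · rintro (h1 | ⟨h1, h2, h4, h5, h6, h7⟩)
      · split_ifs at h1 with hc <;> rw [Prod.mk.injEq] at h1 <;> obtain ⟨rfl, rfl⟩ := h1
        · refine ⟨by omega, by omega, by omega, by omega, by omega, ?_⟩
          rw [ha, hb, s1, s2]; exact hxy
        · refine ⟨by omega, by omega, by omega, by omega, by omega, ?_⟩
          rw [ho, ho, hsodd, hsodd, ha, hb, s1, s2]; omega
      · refine ⟨h1, h2, h4, h5, h6, ?_⟩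
        by_contra hc
        have h9 := hsi (w i) (w j)
        have := hNI i j h5 (by omega)
        omega
  unfold fI
  rw [key, Finset.card_insert_of_notMem]
  split_ifs with hc <;> rw [mem_Inv']
  · omega
  · rw [ho, ho]; omega

theorem ss_mul (k : ℕ) (w : Equiv.Perm ℤ) : sB k * (sB k * w) = w := by
  rw [← mul_assoc, sB_mul_self, one_mul]

theorem fI_down {n : ℕ} {w : Equiv.Perm ℤ} (h : IsSignedPerm n w) {k : ℕ} (hkn : k < n) (hk : Dk k w) :
    fI n w = fI n (sB k * w) + 1 := by
  have := fI_up (signed_sB h hkn) hkn (by rw [Dk_sB]; simpa using hk)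
  rwa [ss_mul] at this

theorem fI_one (n : ℕ) : fI n 1 = 0 := by
  unfold fI
  rw [Finset.card_eq_zero, Finset.eq_empty_iff_forall_notMem]
  rintro ⟨i, j⟩ h
  rw [mem_Inv'] at h
  simp at h
  omega

theorem no_desc {n : ℕ} {w : Equiv.Perm ℤ} (h : IsSignedPerm n w) (hk : ∀ k < n, ¬ Dk k w) : w = 1 := by
  have ho : Odd' w := h.1
  have h1 : ∀ k : ℕ, k < n → (k : ℤ) + 1 ≤ w⁻¹ ((k : ℤ) + 1) := by
    intro k
    induction k with
    | zero =>
      intro hn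
      have g1 := ab_lt ho (hk 0 hn)
      have g2 := ab_zero ho (hk 0 hn) rfl
      have e : yk 0 = 1 := rfl
      rw [e] at g1 g2
      rw [Nat.cast_zero, zero_add]; omega
    | succ k ih =>
      intro hn
      have h2 := ih (by omega)
      have h3 := ab_lt ho (hk _ hn)
      have e : xk (k + 1) = (k : ℤ) + 1 := by simp [xk]
      have e' : yk (k + 1) = (k : ℤ) + 1 + 1 := by simp [yk]
      rw [e, e'] at h3
      push_cast; omega
  have h2 : ∀ j : ℕ, ∀ k : ℕ, k < n → k + 1 + j = n → w⁻¹ ((k : ℤ) + 1) ≤ (k : ℤ) + 1 := by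
    intro j
    induction j with
    | zero =>
      intro k hkn hj
      have := signed_inv_abs h (i := (k : ℤ) + 1) (by rw [abs_le]; omega)
      rw [abs_le] at this; omega
    | succ j ih =>
      intro k hkn hj
      have h2 := ih (k + 1) (by omega) (by omega)
      have h3 := ab_lt ho (hk (k + 1) (by omega))
      have e : xk (k + 1) = (k : ℤ) + 1 := by simp [xk]
      have e' : yk (k + 1) = (k : ℤ) + 1 + 1 := by simp [yk]
      rw [e, e'] at h3
      push_cast at h2; omega
  have h3 : ∀ x : ℤ, 0 < x → w x = x := by
    intro x hx
    by_cases hn : x ≤ n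
    · obtain ⟨k, rfl⟩ : ∃ k : ℕ, x = (k : ℤ) + 1 := ⟨(x - 1).toNat, by omega⟩
      have a1 := h1 k (by omega)
      have a2 := h2 (n - (k + 1)) k (by omega) (by omega)
      have a3 : w⁻¹ ((k : ℤ) + 1) = (k : ℤ) + 1 := by omega
      have a4 := self_inv' w ((k : ℤ) + 1)
      rwa [a3] at a4
    · exact h.2 x (by rw [abs_of_pos hx]; omega)
  ext x
  rcases lt_trichotomy x 0 with hx | hx | hx
  · have := h3 (-x) (by omega)
    rw [ho] at this
    simp; omega
  · rw [hx, ho.zero]; rfl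
  · rw [h3 x hx]; rfl

theorem signed_one (n : ℕ) : IsSignedPerm n 1 := ⟨fun _ => rfl, fun _ _ => rfl⟩

theorem fI_zero {n : ℕ} {w : Equiv.Perm ℤ} (h : IsSignedPerm n w) (hf : fI n w = 0) : w = 1 := by
  apply no_desc h
  intro k hk hD
  have := fI_down h hk hD
  omega

theorem wordProd_cons (a : ℕ) (L : List ℕ) : wordProd (a :: L) = sB a * wordProd L := by
  simp [wordProd]

theorem signed_word {n : ℕ} (L : List ℕ) (hL : ∀ a ∈ L, a < n) : IsSignedPerm n (wordProd L) := by
  induction L with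
  | nil => exact signed_one n
  | cons a L ih =>
    rw [wordProd_cons]
    exact signed_sB (ih (fun b hb => hL b (by simp [hb]))) (hL a (by simp))

theorem fI_le {n : ℕ} (L : List ℕ) (hL : ∀ a ∈ L, a < n) : fI n (wordProd L) ≤ L.length := by
  induction L with
  | nil => have := fI_one n; simp [wordProd]; omega
  | cons a L ih =>
    rw [wordProd_cons]
    have h1 := ih (fun b hb => hL b (by simp [hb]))
    have h2 : IsSignedPerm n (wordProd L) := signed_word L (fun b hb => hL b (by simp [hb]))
    have ha := hL a (by simp)
    simp only [List.length_cons]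
    by_cases hD : Dk a (wordProd L)
    · have := fI_down h2 ha hD; omega
    · have := fI_up h2 ha hD; omega

theorem exists_word {n : ℕ} (m : ℕ) : ∀ {w : Equiv.Perm ℤ}, IsSignedPerm n w → fI n w = m →
    ∃ L : List ℕ, (∀ a ∈ L, a < n) ∧ wordProd L = w ∧ L.length = m := by
  induction m with
  | zero => intro w h hf; exact ⟨[], by simp, by rw [fI_zero h hf]; rfl, rfl⟩
  | succ m ih =>
    intro w h hf
    obtain ⟨k, hk, hD⟩ : ∃ k < n, Dk k w := by
      by_contra hc
      push Not at hc
      rw [no_desc h hc, fI_one] at hf; omega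
    have h1 := fI_down h hk hD
    obtain ⟨L, a1, a2, a3⟩ := ih (signed_sB h hk) (by omega)
    refine ⟨k :: L, ?_, ?_, ?_⟩
    · simp only [List.mem_cons]; rintro a (rfl | ha); exacts [hk, a1 a ha]
    · rw [wordProd_cons, a2, ss_mul]
    · simp [a3]

theorem lengthB_eq {n : ℕ} {w : Equiv.Perm ℤ} (h : IsSignedPerm n w) : lengthB n w = fI n w := by
  unfold lengthB
  apply le_antisymm
  · exact Nat.sInf_le (exists_word _ h rfl)
  · apply le_csInf
    · exact ⟨_, exists_word _ h rfl⟩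
    · rintro m ⟨L, h1, rfl, rfl⟩
      exact fI_le L h1

open Classical in
noncomputable def WF (n : ℕ) : ℕ → Equiv.Perm ℤ → Finset (List ℕ)
  | 0, w => if w = 1 then {[]} else ∅
  | m + 1, w => (Finset.range n).biUnion fun k =>
      if Dk k w then (WF n m (sB k * w)).image (List.cons k) else ∅

theorem WF_card (n : ℕ) (m : ℕ) : ∀ w, ((WF n m w).card : ℤ) = R n m w := by
  classical
  induction m with
  | zero => intro w; simp only [WF, R]; split_ifs <;> simp
  | succ m ih =>
    intro w
    simp only [WF, R]
    rw [Finset.card_biUnion]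
    · push_cast
      apply Finset.sum_congr rfl
      intro k _
      split_ifs
      · rw [Finset.card_image_of_injective _ (List.cons_injective), ih]
      · simp
    · intro i _ j _ hij
      simp only [Function.onFun]
      rw [Finset.disjoint_left]
      intro L h1 h2
      split_ifs at h1 h2 <;> simp at h1 h2
      obtain ⟨_, _, rfl⟩ := h1
      obtain ⟨_, _, h3⟩ := h2
      simp at h3; omega

theorem mem_WF {n : ℕ} (m : ℕ) : ∀ {w : Equiv.Perm ℤ}, IsSignedPerm n w → fI n w = m → ∀ L,
    L ∈ WF n m w ↔ ((∀ a ∈ L, a < n) ∧ wordProd L = w ∧ L.length = m) := by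
  classical
  induction m with
  | zero =>
    intro w h hf L
    have := fI_zero h hf
    subst this
    simp only [WF, if_true, Finset.mem_singleton]
    constructor
    · rintro rfl; simp [wordProd]
    · rintro ⟨_, _, h⟩; simpa using h
  | succ m ih =>
    intro w h hf L
    simp only [WF, Finset.mem_biUnion, Finset.mem_range]
    constructor
    · rintro ⟨k, hk, hL⟩
      split_ifs at hL with hD
      · rw [Finset.mem_image] at hL
        obtain ⟨L', h1, rfl⟩ := hL
        have h2 := fI_down h hk hD
        rw [ih (signed_sB h hk) (by omega)] at h1
        obtain ⟨a1, a2, a3⟩ := h1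
        refine ⟨?_, ?_, ?_⟩
        · simp only [List.mem_cons]; rintro a (rfl | ha); exacts [hk, a1 a ha]
        · rw [wordProd_cons, a2, ss_mul]
        · simp [a3]
      · simp at hL
    · rintro ⟨h1, h2, h3⟩
      cases L with
      | nil => simp at h3
      | cons k L =>
        have hk := h1 k (by simp)
        have hL := fun b hb => h1 b (List.mem_cons_of_mem k hb)
        have hp : wordProd L = sB k * w := by rw [← h2, wordProd_cons, ss_mul]
        have hle := fI_le L hL
        simp only [List.length_cons] at h3
        have hD : Dk k w := by
          by_contra hD
          have := fI_up h hk hD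
          rw [hp] at hle; omega
        have h4 := fI_down h hk hD
        refine ⟨k, hk, ?_⟩
        rw [if_pos hD, Finset.mem_image]
        exact ⟨L, (ih (signed_sB h hk) (by omega) L).2 ⟨hL, hp, by omega⟩, rfl⟩

theorem red_card {n : ℕ} {w : Equiv.Perm ℤ} (h : IsSignedPerm n w) :
    (Nat.card {L : List ℕ // IsReducedWord n w L} : ℤ) = R n (fI n w) w ∧ R n (fI n w) w ≠ 0 := by
  have e : ∀ L, IsReducedWord n w L ↔ L ∈ WF n (fI n w) w := by
    intro L
    rw [mem_WF _ h rfl, IsReducedWord, lengthB_eq h]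
  rw [← WF_card]
  constructor
  · rw [Nat.card_congr (Equiv.subtypeEquivRight e)]
    simp
  · obtain ⟨L, hL⟩ := exists_word _ h rfl
    have := (mem_WF _ h rfl L).2 hL
    simp only [ne_eq, Nat.cast_eq_zero, Finset.card_eq_zero]
    rintro he
    rw [he] at this; simp at this


def WS (d : ℕ) (lam : ℕ → ℕ) : Prop := ∀ i, 1 ≤ i → i < d → lam (i + 1) < lam i ∨ lam (i + 1) = 0
def Rem (d : ℕ) (lam : ℕ → ℕ) (i : ℕ) : Prop :=
  1 ≤ i ∧ i ≤ d ∧ 1 ≤ lam i ∧ (i < d → lam (i + 1) + 1 < lam i ∨ lam (i + 1) = 0)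
def dn (lam : ℕ → ℕ) (i : ℕ) : ℕ → ℕ := fun j => if j = i then lam i - 1 else lam j
def bx (d : ℕ) (lam : ℕ → ℕ) (i : ℕ) : ℤ × ℤ := ((i : ℤ), (lam i : ℤ) + i - d - 1)

theorem WS_dn {d : ℕ} {lam : ℕ → ℕ} (h : WS d lam) {i : ℕ} (hi : Rem d lam i) : WS d (dn lam i) := by
  intro j h1 h2
  have := h j h1 h2
  obtain ⟨a1, a2, a3, a4⟩ := hi
  unfold dn
  by_cases e : j = i
  · subst e
    have := a4 h2
    simp; omega
  · split_ifs with e1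
    · subst e1; omega
    · omega

theorem size_dn {d : ℕ} {lam : ℕ → ℕ} {i : ℕ} (hi : Rem d lam i) : sizeP d lam = sizeP d (dn lam i) + 1 := by
  obtain ⟨a1, a2, a3, a4⟩ := hi
  unfold sizeP
  have hm : i ∈ Finset.Icc 1 d := by simp; omega
  rw [← Finset.add_sum_erase _ _ hm, ← Finset.add_sum_erase _ (dn lam i) hm]
  have : ∑ x ∈ (Finset.Icc 1 d).erase i, dn lam i x = ∑ x ∈ (Finset.Icc 1 d).erase i, lam x := by
    apply Finset.sum_congr rfl
    intro x hx
    unfold dn; rw [if_neg (Finset.ne_of_mem_erase hx)]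
  rw [this]
  simp only [dn, if_true]
  omega

theorem WS_chain {d : ℕ} {lam : ℕ → ℕ} (h : WS d lam) {i : ℕ} (hi : 1 ≤ i) (t : ℕ) : i + t ≤ d → 
    1 ≤ lam (i + t) → 1 ≤ lam i ∧ lam (i + t) + t ≤ lam i := by
  induction t with
  | zero => intro h1 h2; simp at h2 ⊢; omega
  | succ t ih =>
    intro h1 h2
    have h3 := h (i + t) (by omega) (by omega)
    have : i + (t + 1) = i + t + 1 := by omega
    rw [this] at h1 h2 ⊢
    have := ih (by omega) (by omega)
    omega

theorem mem_D {d : ℕ} {lam : ℕ → ℕ} {i : ℕ} {c : ℤ} : ((i : ℤ), c) ∈ Diagram d lam ↔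
    1 ≤ i ∧ i ≤ d ∧ (i : ℤ) - d ≤ c ∧ c + d + 1 ≤ lam i + i := by
  unfold Diagram
  simp

theorem D_form {d : ℕ} {lam : ℕ → ℕ} {p : ℤ × ℤ} (h : p ∈ Diagram d lam) : ∃ (i : ℕ) (c : ℤ), p = ((i : ℤ), c) := by
  obtain ⟨x, c⟩ := p
  obtain ⟨h1, h2, h3⟩ := h
  simp only at h1
  exact ⟨x.toNat, c, by rw [Int.toNat_of_nonneg (by omega)]⟩

theorem bx_mem {d : ℕ} {lam : ℕ → ℕ} {i : ℕ} (hi : Rem d lam i) : bx d lam i ∈ Diagram d lam := by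
  obtain ⟨a1, a2, a3, a4⟩ := hi
  unfold bx; rw [mem_D]; omega

theorem D_dn {d : ℕ} {lam : ℕ → ℕ} {i : ℕ} (hi : Rem d lam i) : Diagram d (dn lam i) = Diagram d lam \ {bx d lam i} := by
  obtain ⟨a1, a2, a3, a4⟩ := hi
  ext p
  have key : ∀ (j : ℕ) (c : ℤ), ((j : ℤ), c) ∈ Diagram d (dn lam i) ↔ ((j : ℤ), c) ∈ Diagram d lam ∧ ¬ ((j : ℤ), c) = bx d lam i := by
    intro j c
    rw [mem_D, mem_D]
    unfold dn bx
    rw [Prod.mk.injEq]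
    split_ifs with e
    · subst e; omega
    · omega
  simp only [Set.mem_sdiff, Set.mem_singleton_iff]
  constructor
  · intro hp
    obtain ⟨j, c, rfl⟩ := D_form hp
    exact (key j c).1 hp
  · rintro ⟨hp, h2⟩
    obtain ⟨j, c, rfl⟩ := D_form hp
    exact (key j c).2 ⟨hp, h2⟩

theorem bx_corner {d : ℕ} {lam : ℕ → ℕ} (h : WS d lam) {i : ℕ} (hi : Rem d lam i) {q : ℤ × ℤ} 
    (hq : q ∈ Diagram d lam) : ¬ ((bx d lam i).1 = q.1 ∧ (bx d lam i).2 < q.2) ∧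
      ¬ ((bx d lam i).2 = q.2 ∧ (bx d lam i).1 < q.1) := by
  obtain ⟨a1, a2, a3, a4⟩ := hi
  obtain ⟨j, c, rfl⟩ := D_form hq
  rw [mem_D] at hq
  unfold bx
  simp only
  constructor
  · rintro ⟨h1, h2⟩
    have : i = j := by omega
    subst this; omega
  · rintro ⟨h1, h2⟩
    have h3 := WS_chain h (i := i + 1) (by omega) (j - (i + 1))
    have e : i + 1 + (j - (i + 1)) = j := by omega
    rw [e] at h3
    have := h3 (by omega) (by omega)
    have := a4 (by omega)
    omega

theorem add_syt {d : ℕ} {lam : ℕ → ℕ} (h : WS d lam) {i : ℕ} (hi : Rem d lam i) {B : ℤ × ℤ → ℕ}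
    (hB : IsSYT d (dn lam i) B) : IsSYT d lam (Function.update B (bx d lam i) (sizeP d lam)) := by
  obtain ⟨⟨hbij, h0⟩, hmono⟩ := hB
  have hD := D_dn hi
  have hs := size_dn hi
  have hmem := bx_mem hi
  have hcor := fun q (hq : q ∈ Diagram d lam) => bx_corner h hi hq
  rw [hD] at hbij h0 hmono
  generalize bx d lam i = b at *
  have hne : ∀ p, p ≠ b → Function.update B b (sizeP d lam) p = B p := fun p hp => Function.update_of_ne hp _ _
  have heq : Function.update B b (sizeP d lam) b = sizeP d lam := by simp
  have hlt : ∀ p ∈ Diagram d lam, p ≠ b → 1 ≤ B p ∧ B p < sizeP d lam := by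
    intro p hp hpb
    have := hbij.mapsTo ⟨hp, hpb⟩
    rw [Set.mem_Icc] at this; omega
  refine ⟨⟨⟨?_, ?_, ?_⟩, ?_⟩, ?_⟩
  · intro p hp
    by_cases e : p = b
    · subst e; rw [heq, Set.mem_Icc]; omega
    · rw [hne p e, Set.mem_Icc]; have := hlt p hp e; omega
  · intro p hp q hq he
    by_cases e : p = b
    · by_cases e2 : q = b
      · rw [e, e2]
      · rw [e, heq, hne q e2] at he
        have := hlt q hq e2; omega
    · by_cases e2 : q = b
      · rw [e2, heq, hne p e] at he
        have := hlt p hp e; omega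
      · rw [hne p e, hne q e2] at he
        exact hbij.injOn ⟨hp, e⟩ ⟨hq, e2⟩ he
  · intro x hx
    rw [Set.mem_Icc] at hx
    by_cases e : x = sizeP d lam
    · exact ⟨b, hmem, by rw [heq, e]⟩
    · obtain ⟨p, hp, rfl⟩ := hbij.surjOn (show x ∈ Set.Icc 1 (sizeP d (dn lam i)) by rw [Set.mem_Icc]; omega)
      exact ⟨p, hp.1, hne p hp.2⟩
  · intro p hp
    have : p ≠ b := by rintro rfl; exact hp hmem
    rw [hne p this]
    exact h0 p (fun hc => hp hc.1)
  · intro p hp q hq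
    by_cases e : p = b
    · subst e
      have := hcor q hq
      exact ⟨fun hc => absurd hc this.1, fun hc => absurd hc this.2⟩
    · by_cases e2 : q = b
      · subst e2
        have := hlt p hp e
        rw [heq, hne p e]
        exact ⟨fun _ => this.2, fun _ => this.2⟩
      · rw [hne p e, hne q e2]
        exact hmono p ⟨hp, e⟩ q ⟨hq, e2⟩

theorem rm_syt {d : ℕ} {lam : ℕ → ℕ} {i : ℕ} (hi : Rem d lam i) {B : ℤ × ℤ → ℕ}
    (hB : IsSYT d lam B) (hb : B (bx d lam i) = sizeP d lam) :
    IsSYT d (dn lam i) (Function.update B (bx d lam i) 0) := by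
  obtain ⟨⟨hbij, h0⟩, hmono⟩ := hB
  have hD := D_dn hi
  have hs := size_dn hi
  have hmem := bx_mem hi
  generalize bx d lam i = b at *
  have hne : ∀ p, p ≠ b → Function.update B b 0 p = B p := fun p hp => Function.update_of_ne hp _ _
  have hlt : ∀ p ∈ Diagram d lam, p ≠ b → 1 ≤ B p ∧ B p < sizeP d lam := by
    intro p hp hpb
    have h1 := hbij.mapsTo hp
    have h2 : B p ≠ sizeP d lam := fun hc => hpb (hbij.injOn hp hmem (by rw [hc, hb]))
    rw [Set.mem_Icc] at h1; omega
  refine ⟨⟨⟨?_, ?_, ?_⟩, ?_⟩, ?_⟩ <;> rw [hD]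
  · intro p hp
    rw [hne p hp.2, Set.mem_Icc]
    have := hlt p hp.1 hp.2; omega
  · intro p hp q hq he
    rw [hne p hp.2, hne q hq.2] at he
    exact hbij.injOn hp.1 hq.1 he
  · intro x hx
    rw [Set.mem_Icc] at hx
    obtain ⟨p, hp, rfl⟩ := hbij.surjOn (show x ∈ Set.Icc 1 (sizeP d lam) by rw [Set.mem_Icc]; omega)
    have : p ≠ b := by rintro rfl; omega
    exact ⟨p, ⟨hp, this⟩, hne p this⟩
  · intro p hp
    by_cases e : p = b
    · subst e; simp
    · rw [hne p e]; exact h0 p (fun hc => hp ⟨hc, e⟩)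
  · intro p hp q hq
    rw [hne p hp.2, hne q hq.2]
    exact hmono p hp.1 q hq.1

theorem max_syt {d : ℕ} {lam : ℕ → ℕ} (h : WS d lam) (hN : 1 ≤ sizeP d lam) {B : ℤ × ℤ → ℕ}
    (hB : IsSYT d lam B) : ∃ i, Rem d lam i ∧ B (bx d lam i) = sizeP d lam := by
  obtain ⟨⟨hbij, h0⟩, hmono⟩ := hB
  obtain ⟨p, hp, hpN⟩ := hbij.surjOn (show sizeP d lam ∈ Set.Icc 1 (sizeP d lam) by rw [Set.mem_Icc]; omega)
  have hle : ∀ q ∈ Diagram d lam, B q ≤ sizeP d lam := by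
    intro q hq
    have := hbij.mapsTo hq
    rw [Set.mem_Icc] at this; exact this.2
  obtain ⟨i, c, rfl⟩ := D_form hp
  have hp' := mem_D.1 hp
  have e : c = (lam i : ℤ) + i - d - 1 := by
    by_contra hc
    have hq : ((i : ℤ), c + 1) ∈ Diagram d lam := by rw [mem_D]; omega
    have h1 := (hmono _ hp _ hq).1 ⟨rfl, by simp⟩
    have := hle _ hq
    omega
  refine ⟨i, ⟨hp'.1, hp'.2.1, by omega, fun hid => ?_⟩, ?_⟩
  · by_contra hc
    have := h i hp'.1 hid
    have hq : (((i + 1 : ℕ) : ℤ), c) ∈ Diagram d lam := by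
      rw [mem_D]; refine ⟨by omega, by omega, by push_cast; omega, by push_cast; omega⟩
    have h1 := (hmono _ hp _ hq).2 ⟨rfl, by push_cast; omega⟩
    have := hle _ hq
    omega
  · unfold bx; rw [← e, hpN]

open Classical in
noncomputable def SF (d : ℕ) : ℕ → (ℕ → ℕ) → Finset (ℤ × ℤ → ℕ)
  | 0, _ => {0}
  | m + 1, lam => (Finset.Icc 1 d).biUnion fun i =>
      if Rem d lam i then (SF d m (dn lam i)).image (fun B => Function.update B (bx d lam i) (m + 1)) else ∅

theorem mem_SF {d : ℕ} (m : ℕ) : ∀ {lam : ℕ → ℕ}, WS d lam → sizeP d lam = m → ∀ B,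
    B ∈ SF d m lam ↔ IsSYT d lam B := by
  classical
  induction m with
  | zero =>
    intro lam h hs B
    have hD : ∀ p, p ∉ Diagram d lam := by
      intro p hp
      obtain ⟨i, c, rfl⟩ := D_form hp
      rw [mem_D] at hp
      have : lam i = 0 := by
        unfold sizeP at hs
        rw [Finset.sum_eq_zero_iff] at hs
        exact hs i (by simp; omega)
      omega
    simp only [SF, Finset.mem_singleton]
    constructor
    · rintro rfl
      refine ⟨⟨⟨fun p hp => absurd hp (hD p), fun p hp => absurd hp (hD p), ?_⟩, fun _ _ => rfl⟩, fun p hp => absurd hp (hD p)⟩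
      intro x hx; rw [Set.mem_Icc] at hx; omega
    · intro hB
      funext p
      exact hB.1.2 p (hD p)
  | succ m ih =>
    intro lam h hs B
    simp only [SF, Finset.mem_biUnion]
    constructor
    · rintro ⟨i, hi, hB⟩
      split_ifs at hB with hR
      · rw [Finset.mem_image] at hB
        obtain ⟨B', h1, rfl⟩ := hB
        rw [← hs]
        have := size_dn hR
        exact add_syt h hR ((ih (WS_dn h hR) (by omega) B').1 h1)
      · simp at hB
    · intro hB
      obtain ⟨i, hR, hb⟩ := max_syt h (by omega) hB
      refine ⟨i, by simp; exact ⟨hR.1, hR.2.1⟩, ?_⟩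
      rw [if_pos hR, Finset.mem_image]
      have := size_dn hR
      refine ⟨_, (ih (WS_dn h hR) (by omega) _).2 (rm_syt hR hB hb), ?_⟩
      simp only [Function.update_idem]
      rw [← hs, ← hb, Function.update_eq_self]

open Classical in
theorem SF_card {d : ℕ} {m : ℕ} {lam : ℕ → ℕ} (h : WS d lam) (hs : sizeP d lam = m + 1) :
    (SF d (m + 1) lam).card = ∑ i ∈ Finset.Icc 1 d, if Rem d lam i then (SF d m (dn lam i)).card else 0 := by
  simp only [SF]
  have hz : ∀ i B, Rem d lam i → B ∈ SF d m (dn lam i) → B (bx d lam i) = 0 := by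
    intro i B hR hB
    have := size_dn hR
    rw [mem_SF m (WS_dn h hR) (by omega)] at hB
    apply hB.1.2
    rw [D_dn hR]; simp
  rw [Finset.card_biUnion]
  · apply Finset.sum_congr rfl
    intro i _
    split_ifs with hR
    · rw [Finset.card_image_of_injOn]
      intro B hB B' hB' he
      have h1 := hz i B hR hB
      have h2 := hz i B' hR hB'
      have h3 := congrArg (fun f => Function.update f (bx d lam i) 0) he
      simp only [Function.update_idem] at h3
      rw [← h1, Function.update_eq_self] at h3
      rw [h1, ← h2, Function.update_eq_self] at h3
      exact h3
    · simp
  · intro i _ j _ hij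
    simp only [Function.onFun]
    rw [Finset.disjoint_left]
    intro L h1 h2
    split_ifs at h1 h2 with hR1 hR2
    · rw [Finset.mem_image] at h1 h2
      obtain ⟨B, hB, rfl⟩ := h1
      obtain ⟨B', hB', he⟩ := h2
      have hb : bx d lam i ≠ bx d lam j := by
        unfold bx; rw [Ne, Prod.mk.injEq]; omega
      have h3 := congrFun he (bx d lam i)
      simp only [Function.update_self, Function.update_of_ne hb] at h3
      have s1 := size_dn hR2
      have h4 := ((mem_SF m (WS_dn h hR2) (by omega) B').1 hB').1
      have h5 : B' (bx d lam i) ≤ m := by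
        by_cases hc : bx d lam i ∈ Diagram d (dn lam j)
        · have := h4.1.mapsTo hc
          rw [Set.mem_Icc] at this; omega
        · rw [h4.2 _ hc]; omega
      omega
    all_goals simp at h1 h2

theorem SF_syt {d : ℕ} {lam : ℕ → ℕ} (h : WS d lam) :
    Nat.card {B : ℤ × ℤ → ℕ // IsSYT d lam B} = (SF d (sizeP d lam) lam).card := by
  rw [Nat.card_congr (Equiv.subtypeEquivRight (fun B => (mem_SF _ h rfl B).symm))]
  simp


structure Gr (n d : ℕ) (w : Equiv.Perm ℤ) (lam : ℕ → ℕ) : Prop where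
  sg : IsSignedPerm n w
  mono : ∀ i j : ℤ, 1 ≤ i → i < j → w i < w j
  neg : ∀ a : ℤ, 1 ≤ a → (w⁻¹ a < 0 ↔ ∃ i, 1 ≤ i ∧ i ≤ d ∧ (lam i : ℤ) = a)
  ws : WS d lam

theorem WS_lt {d : ℕ} {lam : ℕ → ℕ} (h : WS d lam) {i j : ℕ} (hi : 1 ≤ i) (hij : i < j) (hj : j ≤ d)
    (h1 : 1 ≤ lam j) : lam j < lam i := by
  have := WS_chain h hi (j - i)
  have e : i + (j - i) = j := by omega
  rw [e] at this
  have := this hj h1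
  omega

theorem Gr.inv_ne {n d : ℕ} {w : Equiv.Perm ℤ} {lam : ℕ → ℕ} (h : Gr n d w lam) {a : ℤ} (ha : a ≠ 0) :
    w⁻¹ a ≠ 0 := by
  intro hc
  have ho : Odd' w := h.sg.1
  have := self_inv' w a
  rw [hc, ho.zero] at this
  exact ha this.symm

theorem Gr.desc {n d : ℕ} {w : Equiv.Perm ℤ} {lam : ℕ → ℕ} (h : Gr n d w lam) (k : ℕ) :
    Dk k w ↔ w⁻¹ ((k : ℤ) + 1) < 0 ∧ (k ≠ 0 → 0 < w⁻¹ (k : ℤ)) := by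
  have ho : Odd' w := h.sg.1
  by_cases hk : k = 0
  · subst hk
    unfold Dk
    have e : w⁻¹ (xk 0) = - w⁻¹ 1 := by rw [← ho.inv]; rfl
    have e2 : yk 0 = 1 := rfl
    rw [e, e2]
    simp
  · have e1 : xk k = k := by simp [xk, hk]
    have e2 : yk k = (k : ℤ) + 1 := rfl
    unfold Dk
    rw [e1, e2]
    have hA := self_inv' w ((k : ℤ) + 1)
    have hB := self_inv' w (k : ℤ)
    have hA0 := h.inv_ne (a := (k : ℤ) + 1) (by omega)
    have hB0 := h.inv_ne (a := (k : ℤ)) (by omega)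
    generalize w⁻¹ ((k : ℤ) + 1) = A at *
    generalize w⁻¹ (k : ℤ) = B at *
    have m1 := h.mono A B
    have m2 := h.mono (-B) (-A)
    rw [ho, ho] at m2
    constructor
    · intro h1
      refine ⟨?_, fun _ => ?_⟩ <;> by_contra hc <;> omega
    · rintro ⟨h1, h2⟩
      have := h2 hk; omega

theorem Gr.desc_rem {n d : ℕ} {w : Equiv.Perm ℤ} {lam : ℕ → ℕ} (h : Gr n d w lam) (k : ℕ) :
    Dk k w ↔ ∃ i, Rem d lam i ∧ lam i = k + 1 := by
  rw [h.desc k, h.neg _ (by omega)]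
  constructor
  · rintro ⟨⟨i, h1, h2, h3⟩, h4⟩
    refine ⟨i, ⟨h1, h2, by omega, fun hd => ?_⟩, by omega⟩
    have h5 := h.ws i h1 hd
    by_contra hc
    have h6 : lam (i + 1) = k := by omega
    have h7 := h4 (by omega)
    have h8 := (h.neg k (by omega)).2 ⟨i + 1, by omega, by omega, by omega⟩
    omega
  · rintro ⟨i, ⟨h1, h2, h3, h4⟩, h5⟩
    refine ⟨⟨i, h1, h2, by omega⟩, fun hk => ?_⟩
    have h6 := h.inv_ne (a := (k : ℤ)) (by omega)
    by_contra hc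
    obtain ⟨j, g1, g2, g3⟩ := (h.neg k (by omega)).1 (by omega)
    rcases lt_trichotomy i j with hij | hij | hij
    · have h7 := h4 (by omega)
      by_cases e : j = i + 1
      · subst e; omega
      · have := WS_lt h.ws (i := i + 1) (j := j) (by omega) (by omega) g2 (by omega)
        omega
    · subst hij; omega
    · have := WS_lt h.ws g1 hij h2 (by omega)
      omega

theorem Gr.step {n d : ℕ} {w : Equiv.Perm ℤ} {lam : ℕ → ℕ} (h : Gr n d w lam) {k i : ℕ}
    (hi : Rem d lam i) (hk : lam i = k + 1) : Gr n d (sB k * w) (dn lam i) := by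
  have ho : Odd' w := h.sg.1
  have hD := (h.desc_rem k).2 ⟨i, hi, hk⟩
  have hD2 := (h.desc k).1 hD
  have hkn : k < n := by
    by_contra hc
    exact not_Dk h.sg (by omega) hD
  refine ⟨signed_sB h.sg hkn, ?_, ?_, WS_dn h.ws hi⟩
  · intro p q hp hpq
    have h1 := h.mono p q hp hpq
    by_contra hc
    simp only [Equiv.Perm.mul_apply, sB_apply] at hc
    have e : ∀ p z, w p = z → w⁻¹ z = p := by rintro p z rfl; simp
    have e0 : ∀ p, w p = 0 → p = 0 := by
      intro p hp; apply w.injective; rw [hp, ho.zero]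
    unfold Dk at hD
    rcases flip_int k _ _ h1 hc with ⟨h1, h2⟩ | ⟨h1, h2⟩ | ⟨h0, h1 | h1⟩
    · rw [e _ _ h1, e _ _ h2] at hD; omega
    · have h1' := e _ _ h1
      have h2' := e _ _ h2
      rw [ho.inv] at h1' h2'
      omega
    · have := e0 _ h1.2; omega
    · have := e0 _ h1.1; omega
  · intro a ha
    obtain ⟨i1, i2, i3, i4⟩ := hi
    have huniq : ∀ j, 1 ≤ j → j ≤ d → lam j = k + 1 → j = i := by
      intro j h1 h2 h3
      rcases lt_trichotomy i j with hij | hij | hij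
      · have := WS_lt h.ws i1 hij h2 (by omega)
        omega
      · exact hij.symm
      · have := WS_lt h.ws h1 hij i2 (by omega)
        omega
    rw [mul_inv_rev, sB_inv, Equiv.Perm.mul_apply]
    have hs : sB k a = if a = k + 1 then xk k else if a = k then k + 1 else a := by
      rw [sB_apply]; unfold tf xk yk
      split_ifs <;> omega
    rw [hs]
    split_ifs with c1 c2
    · have : ¬ w⁻¹ (xk k) < 0 := by
        unfold xk
        split_ifs with c3
        · subst c3
          rw [ho.inv]; simp at hD2 ⊢; omega
        · have := hD2.2 c3; omega
      simp only [this, false_iff]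
      rintro ⟨j, g1, g2, g3⟩
      unfold dn at g3
      split_ifs at g3 with c4
      · omega
      · exact c4 (huniq j g1 g2 (by omega))
    · simp only [hD2.1, true_iff]
      refine ⟨i, i1, i2, ?_⟩
      simp only [dn, if_true]
      omega
    · rw [h.neg a ha]
      constructor
      · rintro ⟨j, g1, g2, g3⟩
        refine ⟨j, g1, g2, ?_⟩
        unfold dn
        rw [if_neg]
        · exact g3
        · rintro rfl; omega
      · rintro ⟨j, g1, g2, g3⟩
        refine ⟨j, g1, g2, ?_⟩
        unfold dn at g3
        split_ifs at g3 with c4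
        · omega
        · exact g3

theorem Gr.R {n d : ℕ} (m : ℕ) : ∀ {w : Equiv.Perm ℤ} {lam : ℕ → ℕ}, Gr n d w lam →
    BST.R n m w = if m = sizeP d lam then ((SF d m lam).card : ℤ) else 0 := by
  classical
  induction m with
  | zero =>
    intro w lam h
    have : w = 1 ↔ 0 = sizeP d lam := by
      constructor
      · rintro rfl
        unfold sizeP
        symm
        rw [Finset.sum_eq_zero_iff]
        intro i hi
        rw [Finset.mem_Icc] at hi
        by_contra hc
        have := (h.neg (lam i) (by omega)).2 ⟨i, hi.1, hi.2, rfl⟩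
        simp at this
        omega
      · intro hs
        apply no_desc h.sg
        intro k _ hD
        obtain ⟨i, hR, _⟩ := (h.desc_rem k).1 hD
        have := size_dn hR
        omega
    simp only [BST.R, SF, this]
    simp
  | succ m ih =>
    intro w lam h
    have e : BST.R n (m + 1) w = ∑ i ∈ Finset.Icc 1 d, if Rem d lam i then BST.R n m (sB (lam i - 1) * w) else 0 := by
      simp only [BST.R]
      rw [← Finset.sum_filter, ← Finset.sum_filter]
      symm
      apply Finset.sum_bij (fun i _ => lam i - 1)
      · intro i hi
        rw [Finset.mem_filter] at hi ⊢
        have hp := hi.2.2.2.1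
        have hD := (h.desc_rem (lam i - 1)).2 ⟨i, hi.2, by omega⟩
        refine ⟨?_, hD⟩
        rw [Finset.mem_range]
        by_contra hc
        exact not_Dk h.sg (by omega) hD
      · intro i hi j hj he
        rw [Finset.mem_filter] at hi hj
        have hp := hi.2.2.2.1
        have hq := hj.2.2.2.1
        rcases lt_trichotomy i j with hij | hij | hij
        · have := WS_lt h.ws hi.2.1 hij hj.2.2.1 hq
          omega
        · exact hij
        · have := WS_lt h.ws hj.2.1 hij hi.2.2.1 hp
          omega
      · intro k hk
        rw [Finset.mem_filter] at hk
        obtain ⟨i, hR, h1⟩ := (h.desc_rem k).1 hk.2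
        refine ⟨i, ?_, by omega⟩
        rw [Finset.mem_filter, Finset.mem_Icc]
        exact ⟨⟨hR.1, hR.2.1⟩, hR⟩
      · intro i _; rfl
    rw [e]
    have e2 : ∀ i ∈ Finset.Icc 1 d, (if Rem d lam i then BST.R n m (sB (lam i - 1) * w) else 0) = 
        if m + 1 = sizeP d lam then (if Rem d lam i then ((SF d m (dn lam i)).card : ℤ) else 0) else 0 := by
      intro i _
      by_cases hR : Rem d lam i
      · have hp := hR.2.2.1
        have h1 := size_dn hR
        rw [if_pos hR, if_pos hR, ih (h.step (k := lam i - 1) hR (by omega))]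
        have : m = sizeP d (dn lam i) ↔ m + 1 = sizeP d lam := by omega
        simp only [this]
      · simp [hR]
    rw [Finset.sum_congr rfl e2]
    split_ifs with hs
    · rw [SF_card h.ws hs.symm]; push_cast; rfl
    · simp


structure St (n : ℕ) (w : Equiv.Perm ℤ) (r s a c e p : ℤ) : Prop where
  sg : IsSignedPerm n w
  P1 : ∀ i j : ℤ, 1 ≤ i → i < j → 0 < w j → w i < w j
  P2 : ∀ i j k : ℤ, 1 ≤ i → i < j → j < k → w i < w k → w k < 0 → w k < w j → False
  r1 : 1 ≤ r
  rs : r < s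
  sn : s ≤ n
  ws : w s = -a
  wr : w r = e
  a0 : 0 < a
  ea : -a < e
  F1 : ∀ x, 1 ≤ x → x < r → -a < w x
  F2 : ∀ x, r < x → x < s → w x < -a
  F3 : ∀ x, s < x → e < w x
  incr : ∀ i j, r < i → i < j → w i < w j
  ac : a < c
  p1 : 1 ≤ p
  pn : p ≤ n + 1
  vp : (p = s ∧ c = e) ∨ (p ≠ s ∧ p ≠ r ∧ w p = c)
  gap : ∀ b, a < b → b < c → ∃ y, r < y ∧ y < s ∧ w y = -b

theorem exists_last {n : ℕ} {w : Equiv.Perm ℤ} (h : IsSignedPerm n w)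
    (hn : ¬ ∀ i j : ℤ, 1 ≤ i → i < j → w i < w j) :
    ∃ r s : ℤ, 1 ≤ r ∧ r < s ∧ s ≤ n ∧ w s < w r ∧ (∀ i j, r < i → i < j → w i < w j) ∧
      (∀ x, s < x → w r < w x) := by
  push Not at hn
  obtain ⟨i, j, h1, h2, h3⟩ := hn
  have hinj : ∀ i j, i < j → w j ≤ w i → w j < w i := by
    intro i j hij hle
    have : w i ≠ w j := fun hc => hij.ne (w.injective hc)
    omega
  have hbig : ∀ x : ℤ, 1 ≤ x → ∀ y, x < y → (n : ℤ) < y → w x < w y := by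
    intro x hx y hxy hy
    rw [h.2 y (by rw [abs_of_pos] <;> omega)]
    by_cases hxn : x ≤ n
    · have := signed_abs h (i := x) (by rw [abs_le]; omega)
      rw [abs_le] at this; omega
    · rw [h.2 x (by rw [abs_of_pos] <;> omega)]; exact hxy
  obtain ⟨r, ⟨r1, s0, hs0, hs1⟩, hmax⟩ := Int.exists_greatest_of_bdd
    (P := fun r => 1 ≤ r ∧ ∃ s, r < s ∧ w s < w r) ⟨n, by
      rintro z ⟨hz, s, hs, hs'⟩
      by_contra hc
      have := hbig z hz s hs (by omega)
      omega⟩ ⟨i, h1, j, h2, hinj i j h2 h3⟩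
  obtain ⟨s, ⟨hrs, hws⟩, hsmax⟩ := Int.exists_greatest_of_bdd
    (P := fun s => r < s ∧ w s < w r) ⟨n, by
      rintro z ⟨hz, hs'⟩
      by_contra hc
      have := hbig r r1 z hz (by omega)
      omega⟩ ⟨s0, hs0, hs1⟩
  refine ⟨r, s, r1, hrs, ?_, hws, ?_, ?_⟩
  · by_contra hc
    have := hbig r r1 s hrs (by omega)
    omega
  · intro i j hi hij
    by_contra hc
    have := hmax i ⟨by omega, j, hij, hinj i j hij (by omega)⟩
    omega
  · intro x hx
    by_contra hc
    have := hsmax x ⟨by omega, hinj r x (by omega) (by omega)⟩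
    omega

theorem exists_St {n : ℕ} {w : Equiv.Perm ℤ} (h : IsSignedPerm n w)
    (P1 : ∀ i j : ℤ, 1 ≤ i → i < j → 0 < w j → w i < w j)
    (P2 : ∀ i j k : ℤ, 1 ≤ i → i < j → j < k → w i < w k → w k < 0 → w k < w j → False)
    (hn : ¬ ∀ i j : ℤ, 1 ≤ i → i < j → w i < w j) : ∃ r s a c e p, St n w r s a c e p := by
  have ho : Odd' w := h.1
  obtain ⟨r, s, r1, rs, sn, hws, incr, F3⟩ := exists_last h hn
  have hinj : ∀ i j, w i = w j → i = j := fun i j hc => w.injective hc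
  have hz : ∀ i, w i = 0 → i = 0 := fun i hi => hinj i 0 (by rw [hi, ho.zero])
  have ha : w s < 0 := by
    by_contra hc
    have := hz s
    have := P1 r s r1 rs (by omega)
    omega
  have F1 : ∀ x, 1 ≤ x → x < r → w s < w x := by
    intro x hx hxr
    by_contra hc
    have := hinj x s
    exact P2 x r s hx hxr rs (by omega) ha hws
  have hsabs := signed_abs h (i := s) (by rw [abs_le]; omega)
  rw [abs_le] at hsabs
  obtain ⟨c, ⟨hc1, hc2⟩, hcmin⟩ := Int.exists_least_of_bdd
    (P := fun c => -w s < c ∧ 0 < w⁻¹ c) ⟨0, by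
      rintro z ⟨hz, _⟩; omega⟩ ⟨n + 1, by
      refine ⟨by omega, ?_⟩
      rw [signed_inv h (by rw [abs_of_pos] <;> omega)]; omega⟩
  have hcn : c ≤ n + 1 := by
    apply hcmin
    refine ⟨by omega, ?_⟩
    rw [signed_inv h (by rw [abs_of_pos] <;> omega)]; omega
  have hwp := self_inv' w c
  have hpabs := signed_inv_abs (signed_mono h (Nat.le_succ n)) (i := c) (by push_cast; rw [abs_le]; omega)
  rw [abs_le] at hpabs
  push_cast at hpabs
  generalize w⁻¹ c = p0 at *
  refine ⟨r, s, -w s, c, w r, if p0 = r then s else p0, ⟨h, P1, P2, r1, rs, sn, by omega, rfl, by omega,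
    by omega, ?_, ?_, F3, incr, hc1, ?_, ?_, ?_, ?_⟩⟩
  · intro x h1 h2; have := F1 x h1 h2; omega
  · intro x h1 h2; have := incr x s h1 h2; omega
  · split_ifs <;> omega
  · split_ifs <;> omega
  · split_ifs with e1
    · left; subst e1; exact ⟨rfl, hwp.symm⟩
    · right
      refine ⟨?_, e1, hwp⟩
      rintro rfl; omega
  · intro b hb1 hb2
    have h1 : ¬ (0 < w⁻¹ b) := by
      intro hc
      have := hcmin b ⟨hb1, hc⟩
      omega
    have h2 := self_inv' w b
    have h3 := ho (w⁻¹ b)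
    rw [h2] at h3
    generalize w⁻¹ b = y at *
    have hy0 : y ≠ 0 := by rintro rfl; rw [ho.zero] at h2; omega
    refine ⟨-y, ?_, ?_, h3⟩
    · by_contra hc
      have := F1 (-y) (by omega)
      by_cases e : -y = r
      · rw [e] at h3; omega
      · have := this (by omega); omega
    · by_contra hc
      have := F3 (-y)
      by_cases e : -y = s
      · rw [e] at h3; omega
      · have := this (by omega); omega

section chain
variable {n : ℕ} {w : Equiv.Perm ℤ} {r s a c e p : ℤ} (h : St n w r s a c e p)
include h

theorem St.pr : p ≠ r := by
  have := h.rs; rcases h.vp with h1 | h1 <;> omega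

theorem St.pout : p < r ∨ s ≤ p := by
  by_contra hc
  have h1 := h.pr
  have := h.F2 p (by omega) (by omega)
  have := h.ac
  have := h.a0
  rcases h.vp with h2 | h2 <;> omega

/-- values at positive positions avoid `[a, c)` -/
theorem St.avoid {x : ℤ} (hx : 1 ≤ x) : w x < a ∨ c ≤ w x := by
  have ho : Odd' w := h.sg.1
  by_contra hc
  have h1 := h.a0
  have h2 := h.r1
  have h3 := h.rs
  by_cases e1 : w x = a
  · have : x = -s := w.injective (by rw [e1, ho, h.ws]; omega)
    omega
  · obtain ⟨y, y1, y2, y3⟩ := h.gap (w x) (by omega) (by omega)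
    have : x = -y := w.injective (by rw [ho, y3]; omega)
    omega

theorem St.vx (x : ℤ) : (w * tB r s) x = if x = r then -a else if x = s then e else
    if x = -r then a else if x = -s then -e else w x := by
  have ho : Odd' w := h.sg.1
  have h2 := h.r1
  have h3 := h.rs
  rw [Equiv.Perm.mul_apply, tB_apply (by omega) (by omega)]
  unfold tf
  split_ifs
  · exact h.ws
  · exact h.wr
  · rw [ho, h.ws]; omega
  · rw [ho, h.wr]
  · rfl

noncomputable def wn (w : Equiv.Perm ℤ) (r s p : ℤ) : Equiv.Perm ℤ := (w * tB r s) * tB r (-p)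

theorem St.wnx {x : ℤ} (hx : 1 ≤ x) : wn w r s p x = if x = r then -c else if x = p then a else
    if x = s then e else w x := by
  have ho : Odd' w := h.sg.1
  have h2 := h.r1
  have h3 := h.rs
  have h4 := h.p1
  have h5 := h.pr
  have h6 := h.vp
  have h7 := ho p
  unfold wn
  rw [Equiv.Perm.mul_apply, tB_apply (by omega) (by omega), h.vx]
  unfold tf
  grind (splits := 30)

theorem St.wn_sg : IsSignedPerm (n + 1) (wn w r s p) := by
  have h2 := h.r1
  have h3 := h.rs
  have h4 := h.p1
  have h5 := h.pn
  have h6 := h.sn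
  unfold wn
  apply signed_tB
  · apply signed_tB (signed_mono h.sg (Nat.le_succ n))
    · omega
    · omega
    · rw [abs_le]; push_cast; omega
    · rw [abs_le]; push_cast; omega
  · omega
  · omega
  · rw [abs_le]; push_cast; omega
  · rw [abs_le]; push_cast; omega

theorem St.v_sg : IsSignedPerm n (w * tB r s) := by
  have h2 := h.r1
  have h3 := h.rs
  have h6 := h.sn
  apply signed_tB h.sg
  · omega
  · omega
  · rw [abs_le]; omega
  · rw [abs_le]; omega

theorem St.bef {x : ℤ} (hx : 1 ≤ x) (hxp : x < p) : (if x = r then -a else if x = s then e else w x) < a := by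
  have h1 := h.a0
  have h2 := h.r1
  have h3 := h.rs
  have h4 := h.avoid hx
  have h5 := h.ac
  have h6 := h.wr
  have h9 := h.ea
  split_ifs with e1 e2
  · omega
  · subst e2
    have h7 := h.avoid h.r1
    rcases h.vp with h8 | h8
    · omega
    · have := h.F3 p hxp; omega
  · rcases h.vp with h8 | h8
    · have hxs : x < s := by omega
      by_cases hxr : x < r
      · have := h.P1 x r hx hxr (by omega); omega
      · have := h.F2 x (by omega) hxs; omega
    · have := h.P1 x p hx hxp (by omega); omega

theorem St.v_P1 {i j : ℤ} (hi : 1 ≤ i) (hij : i < j) (hj : 0 < (w * tB r s) j) : (w * tB r s) i < (w * tB r s) j := by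
  have h1 := h.a0
  have h2 := h.r1
  have h3 := h.rs
  have h5 := h.ac
  have h6 := h.wr
  have h9 := h.ea
  rw [h.vx, h.vx] at *
  have g1 := h.P1 i j hi hij
  have g2 := h.F3 j
  have g3 := h.F2 i
  have g4 := h.F2 j
  have g5 := h.P1 i r hi
  have g6 := h.P1 r j
  have g7 := h.ws
  have g8 := h.incr i j
  grind (splits := 30)

theorem St.Req (m : ℕ) : R n m w = R (n + 1) m (wn w r s p) := by
  classical
  have ho : Odd' w := h.sg.1
  have h1 := h.a0
  have h2 := h.r1
  have h3 := h.rs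
  have h4 := h.p1
  have h5 := h.ac
  have h6 := h.wr
  have h7 := h.sn
  have h8 := h.pn
  have h9 := h.ea
  have h10 := h.pr
  rw [R_stable (Nat.le_succ n) m h.sg]
  have hT := transition (n := n) (r := r) (by omega) (by rw [abs_le]; omega) m h.v_sg
  have hv : Odd' (w * tB r s) := h.v_sg.1
  have hvr : (w * tB r s) r = -a := by rw [h.vx]; simp
  have hvs : (w * tB r s) s = e := by rw [h.vx, if_neg (by omega)]; simp
  have hvp : (w * tB r s) p = c := by
    rw [h.vx]
    have := h.vp
    grind
  have hww : (w * tB r s) * tB r s = w := by rw [mul_assoc, tB_mul_self (by omega) (by omega), mul_one]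
  have hchar : ∀ x ∈ Ss n r, Cv (w * tB r s) r x ↔ (x = s ∨ x = -p) := by
    intro x hx
    rw [mem_Ss] at hx
    obtain ⟨hx1, hx0, hxr⟩ := hx
    unfold Cv
    split_ifs with hlt
    · constructor
      · rintro ⟨_, c2, c3⟩
        left
        by_contra hc
        rw [hvr] at c2 c3
        have hxs : s < x := by
          by_contra hc2
          have h1' := h.F2 x hlt (by omega)
          rw [h.vx] at c2
          rw [if_neg hxr, if_neg hc, if_neg (by omega), if_neg (by omega)] at c2
          omega
        have := c3 s h3 hxs (by rw [hvs]; omega) (by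
          rw [hvs, h.vx, if_neg hxr, if_neg hc, if_neg (by omega), if_neg (by omega)]
          exact h.F3 x hxs)
        omega
      · rintro (rfl | rfl)
        · refine ⟨h3, by rw [hvr, hvs]; exact h9, ?_⟩
          intro q q1 q2 q3 q4
          have := h.F2 q q1 q2
          rw [hvr, h.vx, if_neg (by omega), if_neg (by omega), if_neg (by omega), if_neg (by omega)] at q3
          omega
        · omega
    · have hlt' : x < r := by omega
      constructor
      · rintro ⟨_, c2, c3⟩
        right
        rw [hvr] at c2 c3
        have hxneg : x < 0 := by
          by_contra hc2
          have := h.F1 x (by omega) hlt'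
          rw [h.vx, if_neg (by omega), if_neg (by omega), if_neg (by omega), if_neg (by omega)] at c2
          omega
        obtain ⟨y, rfl⟩ : ∃ y, x = -y := ⟨-x, by omega⟩
        have hvy := hv y
        have hvyc : c ≤ (w * tB r s) y := by
          rw [hvy] at c2
          have hyr : y ≠ r := by rintro rfl; rw [hvr] at c2; omega
          by_cases hys : y = s
          · subst hys
            have := h.avoid h.r1
            rw [hvs] at c2 ⊢; omega
          · have := h.avoid (x := y) (by omega)
            rw [h.vx, if_neg hyr, if_neg hys, if_neg (by omega), if_neg (by omega)] at c2 ⊢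
            omega
        by_contra hc
        have hyp : y ≠ p := by omega
        have hne : (w * tB r s) y ≠ c := fun hcc => hyp ((w * tB r s).injective (by rw [hcc, hvp]))
        rcases lt_or_gt_of_ne hyp with hl | hl
        · have := h.v_P1 (i := y) (j := p) (by omega) hl (by omega)
          omega
        · have h1' := hv p
          have := c3 (-p) (by omega) (by omega) (by omega) (by omega)
          omega
      · rintro (rfl | rfl)
        · omega
        · refine ⟨hlt', by rw [hv, hvr, hvp]; omega, ?_⟩
          intro q q1 q2 q3 q4
          exfalso
          rw [hv, hvp] at q3
          rw [hvr] at q4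
          obtain ⟨y, y1, y2, y3⟩ := h.gap (-(w * tB r s) q) (by omega) (by omega)
          have : (w * tB r s) y = (w * tB r s) q := by
            have : (w * tB r s) y = w y := by
              rw [h.vx, if_neg (by omega), if_neg (by omega), if_neg (by omega), if_neg (by omega)]
            omega
          have := (w * tB r s).injective this
          omega
  unfold T at hT
  have hms : s ∈ Ss n r := by
    rw [mem_Ss, abs_le]; omega
  have hmp : -p ∈ Ss n r := by
    rw [mem_Ss, abs_le]; omega
  rw [Finset.sum_congr rfl (g := fun x => (if x = s then R (n + 1) m w else 0) - (if x = -p then R (n + 1) m (wn w r s p) else 0))] at hT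
  · rw [Finset.sum_sub_distrib, Finset.sum_ite_eq' (Ss n r) s, Finset.sum_ite_eq' (Ss n r) (-p), if_pos hms, if_pos hmp] at hT
    exact sub_eq_zero.1 hT
  · intro x hx
    simp only [hchar x hx]
    by_cases e1 : x = s
    · subst e1
      rw [if_pos (Or.inl rfl), if_pos rfl, if_neg (by omega), hww]
      unfold eps; rw [if_pos h3]; ring
    · by_cases e2 : x = -p
      · subst e2
        rw [if_pos (Or.inr rfl), if_pos rfl, if_neg e1]
        unfold eps wn; rw [if_neg (by omega)]; ring
      · rw [if_neg (by omega), if_neg e1, if_neg e2]; ring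
end chain


section chain2
variable {n : ℕ} {w : Equiv.Perm ℤ} {r s a c e p : ℤ} (h : St n w r s a c e p)
include h

theorem St.n_incr {j k : ℤ} (hj : r < j) (hjk : j < k) : wn w r s p j < wn w r s p k := by
  have h1 := h.a0
  have h2 := h.r1
  have h3 := h.rs
  have h5 := h.ac
  have h6 := h.wr
  have h9 := h.ea
  have h10 := h.pr
  have h11 := h.pout
  have h12 := h.vp
  rw [h.wnx (x := j) (by omega), h.wnx (x := k) (by omega), if_neg (show j ≠ r by omega), if_neg (show k ≠ r by omega)]
  have g2 := h.F3 k
  have g3 := h.F2 j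
  have g4 := h.incr j k
  have g5 := h.bef (x := j) (by omega)
  grind (splits := 30)

theorem St.n_P1 {i j : ℤ} (hi : 1 ≤ i) (hij : i < j) (hj : 0 < wn w r s p j) :
    wn w r s p i < wn w r s p j := by
  have h1 := h.a0
  have h2 := h.r1
  have h3 := h.rs
  have h5 := h.ac
  have h6 := h.wr
  have h9 := h.ea
  have h10 := h.pr
  have h11 := h.pout
  have h12 := h.vp
  by_cases hir : r < i
  · exact h.n_incr hir hij
  rw [h.wnx (by omega)] at hj ⊢
  rw [h.wnx (by omega)]
  have g2 := h.F3 j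
  have g3 := h.P1 i j hi hij
  have g5 := h.bef (x := i) (by omega)
  have g6 := h.P1 i r hi
  grind (splits := 30)

theorem St.n_P2 {i j k : ℤ} (hi : 1 ≤ i) (hij : i < j) (hjk : j < k)
    (q1 : wn w r s p i < wn w r s p k) (q2 : wn w r s p k < 0) (q3 : wn w r s p k < wn w r s p j) : False := by
  have h1 := h.a0
  have h2 := h.r1
  have h3 := h.rs
  have h5 := h.ac
  have h6 := h.wr
  have h9 := h.ea
  have h10 := h.pr
  have h11 := h.pout
  have h12 := h.vp
  by_cases hjr : r < j
  · have := h.n_incr hjr hjk; omega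
  rw [h.wnx (by omega)] at q1 q2 q3
  rw [h.wnx (by omega)] at q1 q3
  have f1 := h.F1 i hi (by omega)
  have f2 := h.F1 k (by omega)
  have f3 := h.F2 k
  have f4 := h.F3 k
  have f5 := h.P2 i j k hi hij hjk
  have f6 := h.P2 i j r hi hij
  grind (splits := 30)

end chain2

def Cd (w : Equiv.Perm ℤ) (b l : ℤ) : Prop :=
  ∃ q : ℤ, 1 ≤ q ∧ w q = -b ∧ b + (((Finset.Ico 1 q).filter (fun x => -b < w x)).card : ℤ) = l

section chain3
variable {n : ℕ} {w : Equiv.Perm ℤ} {r s a c e p : ℤ} (h : St n w r s a c e p)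
include h

theorem St.code {b l : ℤ} (hb : 0 < b) (hc : Cd w b l) :
    Cd (wn w r s p) (if a ≤ b ∧ b < c then b + 1 else b) l := by
  have ho : Odd' w := h.sg.1
  have h1 := h.a0
  have h2 := h.r1
  have h3 := h.rs
  have h5 := h.ac
  have h6 := h.wr
  have h9 := h.ea
  have h10 := h.pr
  have h11 := h.pout
  have h12 := h.vp
  have h13 := h.ws
  obtain ⟨q, q1, q2, q3⟩ := hc
  have f1 := h.F1 q q1
  have f2 := h.F2 q
  have f3 := h.F3 q
  have hinj : ∀ i j, w i = w j → i = j := fun i j hc => w.injective hc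
  have hinj' := hinj q s
  split_ifs with hA
  · have e1 : (Finset.Ico 1 q).filter (fun x => -b < w x) = Finset.Icc 1 r := by
      ext x
      simp only [Finset.mem_filter, Finset.mem_Ico, Finset.mem_Icc]
      constructor
      · rintro ⟨⟨x1, x2⟩, x3⟩
        refine ⟨x1, ?_⟩
        by_contra hc
        have := h.incr x q (by omega) x2
        omega
      · rintro ⟨x1, x2⟩
        have hqr : r < q := by
          by_contra hcc
          by_cases hqr : q = r
          · subst hqr; omega
          · have := f1 (by omega); omega
        refine ⟨⟨x1, by omega⟩, ?_⟩
        by_cases hxr : x = r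
        · subst hxr; omega
        · have := h.F1 x x1 (by omega); omega
    rw [e1, Int.card_Icc] at q3
    have hlow : ∀ x, 1 ≤ x → x < r → -(b+1) < wn w r s p x := by
      intro x x1 x2
      have := h.F1 x x1 x2
      rw [h.wnx x1]
      split_ifs <;> omega
    by_cases hbc : b + 1 = c
    · refine ⟨r, h2, by rw [h.wnx h2, if_pos rfl, hbc], ?_⟩
      rw [Finset.filter_true_of_mem, Int.card_Ico]
      · omega
      · intro x hx
        rw [Finset.mem_Ico] at hx
        exact hlow x hx.1 hx.2
    · obtain ⟨y, y1, y2, y3⟩ := h.gap (b + 1) (by omega) (by omega)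
      have hy' : wn w r s p y = w y := by
        rw [h.wnx (by omega), if_neg (by omega), if_neg (by omega), if_neg (by omega)]
      refine ⟨y, by omega, by rw [hy', y3], ?_⟩
      have e2 : (Finset.Ico 1 y).filter (fun x => -(b+1) < wn w r s p x) = Finset.Ico 1 r := by
        ext x
        simp only [Finset.mem_filter, Finset.mem_Ico]
        constructor
        · rintro ⟨⟨x1, x2⟩, x3⟩
          refine ⟨x1, ?_⟩
          by_contra hc
          by_cases hxr : x = r
          · rw [h.wnx x1, if_pos hxr] at x3; omega
          · have := h.n_incr (j := x) (k := y) (by omega) x2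
            omega
        · rintro ⟨x1, x2⟩
          exact ⟨⟨x1, by omega⟩, hlow x x1 x2⟩
      rw [e2, Int.card_Ico]
      omega
  · by_cases hba : b < a
    · by_cases hqr : q = r
      · subst hqr
        have hps : s ≠ p := by
          rintro rfl; omega
        have hns : wn w q s p s = -b := by
          rw [h.wnx (by omega), if_neg (by omega), if_neg (by omega), if_pos rfl]; omega
        refine ⟨s, by omega, hns, ?_⟩
        rw [← q3]
        congr 3
        ext x
        simp only [Finset.mem_filter, Finset.mem_Ico]
        constructor
        · rintro ⟨⟨x1, x2⟩, x3⟩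
          have : x < q := by
            by_contra hcc
            by_cases hxq : x = q
            · rw [h.wnx x1, if_pos hxq] at x3; omega
            · have := h.n_incr (j := x) (k := s) (by omega) x2; omega
          refine ⟨⟨x1, this⟩, ?_⟩
          rw [h.wnx x1, if_neg (by omega)] at x3
          by_cases hxp : x = p
          · subst hxp; omega
          · rw [if_neg hxp, if_neg (by omega)] at x3; exact x3
        · rintro ⟨⟨x1, x2⟩, x3⟩
          refine ⟨⟨x1, by omega⟩, ?_⟩
          rw [h.wnx x1, if_neg (by omega)]
          split_ifs <;> omega
      · have hqp : q ≠ p := by rintro rfl; grind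
        have hqs : q ≠ s := by rintro rfl; omega
        refine ⟨q, q1, by rw [h.wnx q1, if_neg hqr, if_neg hqp, if_neg hqs]; exact q2, ?_⟩
        rw [← q3]
        congr 3
        apply Finset.filter_congr
        intro x hx
        rw [Finset.mem_Ico] at hx
        rw [h.wnx hx.1]
        grind (splits := 30)
    · have hbc : b ≠ c := by
        rintro rfl
        have g1 := ho p
        have g2 := ho r
        have g3 := hinj q (-p)
        have g4 := hinj q (-r)
        have g5 := h.p1
        rcases h12 with ⟨_, h12⟩ | ⟨_, _, h12⟩
        · have := g4 (by omega); omega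
        · have := g3 (by omega); omega
      have hq : r < q ∧ q < s := by
        have : q ≠ r := by rintro rfl; omega
        have : q ≠ s := by rintro rfl; omega
        omega
      refine ⟨q, q1, by rw [h.wnx q1, if_neg (by omega), if_neg (by omega), if_neg (by omega)]; exact q2, ?_⟩
      rw [← q3]
      congr 3
      apply Finset.filter_congr
      intro x hx
      rw [Finset.mem_Ico] at hx
      rw [h.wnx hx.1]
      have := h.F1 x hx.1
      grind (splits := 30)
end chain3

structure Cl (n d : ℕ) (w : Equiv.Perm ℤ) (lam : ℕ → ℕ) (val : ℕ → ℤ) : Prop where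
  sg : IsSignedPerm n w
  P1 : ∀ i j : ℤ, 1 ≤ i → i < j → 0 < w j → w i < w j
  P2 : ∀ i j k : ℤ, 1 ≤ i → i < j → j < k → w i < w k → w k < 0 → w k < w j → False
  vpos : ∀ i, 1 ≤ i → i ≤ d → 0 < val i
  code : ∀ i, 1 ≤ i → i ≤ d → Cd w (val i) (lam i)
  all : ∀ q : ℤ, 1 ≤ q → w q < 0 → ∃ i, 1 ≤ i ∧ i ≤ d ∧ w q = - val i

theorem Cl.step {n d : ℕ} {w : Equiv.Perm ℤ} {lam : ℕ → ℕ} {val : ℕ → ℤ} (H : Cl n d w lam val)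
    {r s a c e p : ℤ} (h : St n w r s a c e p) :
    Cl (n + 1) d (wn w r s p) lam (fun i => if a ≤ val i ∧ val i < c then val i + 1 else val i) := by
  have h1 := h.a0
  have h2 := h.r1
  have h3 := h.rs
  have h5 := h.ac
  have h6 := h.wr
  have h9 := h.ea
  have h10 := h.pr
  have h11 := h.pout
  have h12 := h.vp
  have h13 := h.ws
  refine ⟨h.wn_sg, fun i j => h.n_P1, fun i j k => h.n_P2, ?_, ?_, ?_⟩
  · intro i i1 i2
    have := H.vpos i i1 i2
    split_ifs <;> omega
  · intro i i1 i2
    exact h.code (H.vpos i i1 i2) (H.code i i1 i2)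
  · have key : ∀ b, a < b → b ≤ c → ∃ i, 1 ≤ i ∧ i ≤ d ∧ -b = -(if a ≤ val i ∧ val i < c then val i + 1 else val i) := by
      intro b b1 b2
      have : ∃ y, 1 ≤ y ∧ w y = -(b-1) := by
        by_cases hb : b - 1 = a
        · exact ⟨s, by omega, by omega⟩
        · obtain ⟨y, y1, y2, y3⟩ := h.gap (b-1) (by omega) (by omega)
          exact ⟨y, by omega, y3⟩
      obtain ⟨y, y1, y2⟩ := this
      obtain ⟨i, i1, i2, i3⟩ := H.all y y1 (by omega)
      refine ⟨i, i1, i2, ?_⟩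
      rw [if_pos (by omega)]; omega
    intro q q1 hq
    have hwq := h.wnx q1
    by_cases e1 : q = r
    · rw [hwq, if_pos e1]; exact key c h5 le_rfl
    by_cases e2 : q = p
    · rw [hwq, if_neg e1, if_pos e2] at hq; omega
    rw [if_neg e1, if_neg e2] at hwq
    by_cases e3 : q = s
    · rw [if_pos e3] at hwq
      obtain ⟨i, i1, i2, i3⟩ := H.all r h2 (by omega)
      refine ⟨i, i1, i2, ?_⟩
      rw [if_neg (by omega)]; omega
    rw [if_neg e3] at hwq
    by_cases e4 : a < - w q ∧ - w q ≤ c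
    · obtain ⟨i, i1, i2, i3⟩ := key (- w q) e4.1 e4.2
      exact ⟨i, i1, i2, by rw [hwq]; omega⟩
    · obtain ⟨i, i1, i2, i3⟩ := H.all q q1 (by omega)
      refine ⟨i, i1, i2, ?_⟩
      have : w q ≠ -a := by
        intro hc; exact e3 (w.injective (by rw [hc, h13]))
      rw [if_neg (by omega)]; omega

theorem Cl.chain {d : ℕ} {lam : ℕ → ℕ} (hWS : WS d lam) (M : ℕ) : ∀ {n : ℕ} {w : Equiv.Perm ℤ} {val : ℕ → ℤ},
    Cl n d w lam val → (∑ i ∈ Finset.Icc 1 d, ((lam i : ℤ) - val i).toNat) = M →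
    ∃ n' u, Gr n' d u lam ∧ ∀ m, BST.R n m w = BST.R n' m u := by
  induction M using Nat.strong_induction_on with
  | _ M ih =>
  intro n w val H hM
  have ho : Odd' w := H.sg.1
  by_cases hinc : ∀ i j : ℤ, 1 ≤ i → i < j → w i < w j
  · refine ⟨n, w, ⟨H.sg, hinc, ?_, hWS⟩, fun m => rfl⟩
    have hval : ∀ i, 1 ≤ i → i ≤ d → val i = lam i := by
      intro i i1 i2
      obtain ⟨q, q1, q2, q3⟩ := H.code i i1 i2
      rw [Finset.filter_false_of_mem] at q3
      · simpa using q3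
      · intro x hx
        rw [Finset.mem_Ico] at hx
        have := hinc x q hx.1 hx.2
        omega
    intro b hb
    constructor
    · intro hneg
      have h1 := self_inv' w b
      have h2 := ho (w⁻¹ b)
      obtain ⟨i, i1, i2, i3⟩ := H.all (-(w⁻¹ b)) (by omega) (by omega)
      exact ⟨i, i1, i2, by have := hval i i1 i2; omega⟩
    · rintro ⟨i, i1, i2, i3⟩
      obtain ⟨q, q1, q2, q3⟩ := H.code i i1 i2
      have := hval i i1 i2
      have h2 := ho q
      have : w⁻¹ b = -q := by
        rw [Equiv.Perm.inv_eq_iff_eq]; omega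
      omega
  · obtain ⟨r, s, a, c, e, p, h⟩ := exists_St H.sg H.P1 H.P2 hinc
    have H' := H.step h
    have hle : ∀ i, 1 ≤ i → i ≤ d → val i ≤ lam i := by
      intro i i1 i2
      obtain ⟨q, q1, q2, q3⟩ := H.code i i1 i2
      omega
    have hle' : ∀ i, 1 ≤ i → i ≤ d → (if a ≤ val i ∧ val i < c then val i + 1 else val i) ≤ lam i := by
      intro i i1 i2
      obtain ⟨q, q1, q2, q3⟩ := H'.code i i1 i2
      omega
    have := ih _ (by
      rw [← hM]
      apply Finset.sum_lt_sum (s := Finset.Icc 1 d)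
        (f := fun i => ((lam i : ℤ) - (if a ≤ val i ∧ val i < c then val i + 1 else val i)).toNat)
      · intro i hi
        rw [Finset.mem_Icc] at hi
        have := hle i hi.1 hi.2
        split_ifs <;> omega
      · have h1 := h.ws
        have h2 := h.a0
        have h3 := h.r1
        have h4 := h.rs
        have h5 := h.ac
        obtain ⟨i, i1, i2, i3⟩ := H.all s (by omega) (by omega)
        refine ⟨i, Finset.mem_Icc.2 ⟨i1, i2⟩, ?_⟩
        have := hle i i1 i2
        have := hle' i i1 i2
        rw [if_pos (by omega)] at this ⊢
        omega) H' rfl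
    obtain ⟨n', u, hg, hR⟩ := this
    exact ⟨n', u, hg, fun m => by rw [h.Req, hR]⟩


theorem wordProd_append (L L' : List ℕ) : wordProd (L ++ L') = wordProd L * wordProd L' := by
  unfold wordProd; rw [List.map_append, List.prod_append]

theorem run_apply (m : ℕ) : ∀ (b : ℕ), 1 ≤ b → ∀ x : ℤ, 1 ≤ x →
    wordProd ((List.range m).map (fun t => b + t)).reverse x =
      if x = b then (b : ℤ) + m else if b < x ∧ x ≤ b + m then x - 1 else x := by
  induction m with
  | zero =>
    intro b hb x hx
    simp [wordProd]
    grind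
  | succ m ih =>
    intro b hb x hx
    have e : (List.range (m + 1)).map (fun t => b + t) = b :: (List.range m).map (fun t => (b + 1) + t) := by
      rw [List.range_succ_eq_map, List.map_cons, List.map_map]
      congr 1
      apply List.map_congr_left
      intro t _
      simp only [Function.comp]; omega
    rw [e, List.reverse_cons, wordProd_append, Equiv.Perm.mul_apply]
    have e2 : wordProd [b] = sB b := by simp [wordProd]
    have e3 : sB b x = if x = b then (b : ℤ) + 1 else if x = b + 1 then (b : ℤ) else x := by
      rw [sB_apply]
      have hx1 : xk b = b := by unfold xk; rw [if_neg (by omega)]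
      rw [hx1]
      clear e e2 ih
      unfold tf yk
      split_ifs <;> omega
    have e4 : 1 ≤ sB b x := by rw [e3]; split_ifs <;> omega
    rw [e2, ih (b + 1) (by omega) _ e4, e3]
    push_cast
    clear e e2 e3 e4 ih
    split_ifs <;> omega

structure In (d r k : ℕ) (lam : ℕ → ℕ) (u : Equiv.Perm ℤ) : Prop where
  tail : ∀ x : ℤ, r + k < x → x ≤ r + d → u x = -(x - r)
  hi : ∀ x : ℤ, r + d < x → u x = x
  le : ∀ x : ℤ, 1 ≤ x → x ≤ r + k → u x ≤ r + d
  P1 : ∀ i j : ℤ, 1 ≤ i → i < j → j ≤ r + k → 0 < u j → u i < u j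
  P2 : ∀ i j l : ℤ, 1 ≤ i → i < j → j < l → l ≤ r + k → u i < u l → u l < 0 → u l < u j → False
  code : ∀ j : ℕ, 1 ≤ j → j ≤ k → ∃ q : ℤ, 1 ≤ q ∧ q ≤ r + k ∧ u q = -j ∧
    (j : ℤ) + (((Finset.Ico 1 q).filter (fun x => -(j : ℤ) < u x)).card : ℤ) = lam (d + 1 - j)
  all : ∀ q : ℤ, 1 ≤ q → q ≤ r + k → u q < 0 → ∃ j : ℕ, 1 ≤ j ∧ j ≤ k ∧ u q = -j
  F : ∀ y z : ℤ, 1 ≤ y → (lam (d + 1 - k) : ℤ) ≤ y + k - 1 → y < z → z ≤ r + k → u z < 0 → u y < u z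

theorem In.step {d r k : ℕ} {lam : ℕ → ℕ} {u : Equiv.Perm ℤ} (h : In d r k lam u) (hk : k < d)
    {b m : ℕ} (hb : 1 ≤ b) (hbm : b + m = r + k + 1) (hl : b + k = lam (d - k))
    (hst : 1 ≤ k → lam (d + 1 - k) < lam (d - k)) :
    In d r (k + 1) lam (u * wordProd ((List.range m).map (fun t => b + t)).reverse) := by
  have hx : ∀ x : ℤ, 1 ≤ x → (u * wordProd ((List.range m).map (fun t => b + t)).reverse) x =
      if x = b then -((k : ℤ) + 1) else if b < x ∧ x ≤ b + m then u (x - 1) else u x := by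
    intro x hx
    rw [Equiv.Perm.mul_apply, run_apply m b hb x hx]
    by_cases e1 : x = b
    · rw [if_pos e1, if_pos e1, h.tail _ (by omega) (by omega)]; omega
    · rw [if_neg e1, if_neg e1]; split_ifs <;> rfl
  generalize u * wordProd ((List.range m).map (fun t => b + t)).reverse = v at hx
  have hlo : ∀ x : ℤ, 1 ≤ x → x ≤ r + k → -(k : ℤ) ≤ u x := by
    intro x x1 x2
    by_contra hc
    obtain ⟨j, j1, j2, j3⟩ := h.all x x1 x2 (by omega)
    omega
  have hvb : v b = -((k : ℤ) + 1) := by rw [hx _ (by omega), if_pos rfl]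
  -- positions other than `b`
  have hs : ∀ x : ℤ, 1 ≤ x → x ≤ r + k + 1 → x ≠ b → ∃ y : ℤ, 1 ≤ y ∧ y ≤ r + k ∧ v x = u y ∧
      ((x < b ∧ y = x) ∨ (b < x ∧ y = x - 1)) := by
    intro x x1 x2 x3
    rw [hx x x1, if_neg x3]
    by_cases e : x < b
    · rw [if_neg (by omega)]; exact ⟨x, x1, by omega, rfl, Or.inl ⟨e, rfl⟩⟩
    · rw [if_pos (by omega)]; exact ⟨x - 1, by omega, by omega, rfl, Or.inr ⟨by omega, rfl⟩⟩
  refine ⟨?_, ?_, ?_, ?_, ?_, ?_, ?_, ?_⟩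
  · intro x x1 x2
    push_cast at x1
    rw [hx x (by omega), if_neg (by omega), if_neg (by omega), h.tail x (by omega) x2]
  · intro x x1
    rw [hx x (by omega), if_neg (by omega), if_neg (by omega), h.hi x x1]
  · intro x x1 x2
    push_cast at x2
    by_cases e : x = b
    · rw [e, hvb]; omega
    · obtain ⟨y, y1, y2, y3, _⟩ := hs x x1 (by omega) e
      have := h.le y y1 y2; omega
  · intro i j i1 ij j1 hj
    push_cast at j1
    have ej : j ≠ b := by rintro rfl; omega
    by_cases ei : i = b
    · rw [ei, hvb]; omega
    obtain ⟨y, y1, y2, y3, y4⟩ := hs j (by omega) (by omega) ej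
    obtain ⟨z, z1, z2, z3, z4⟩ := hs i (by omega) (by omega) ei
    have := h.P1 z y z1 (by omega) y2 (by omega)
    omega
  · intro i j l i1 ij jl l1 g1 g2 g3
    push_cast at l1
    have el : l ≠ b := by
      rintro rfl
      obtain ⟨z, z1, z2, z3, z4⟩ := hs i (by omega) (by omega) (by omega)
      have := hlo z z1 z2
      omega
    obtain ⟨y, y1, y2, y3, y4⟩ := hs l (by omega) (by omega) el
    have ej : j ≠ b := by
      rintro rfl
      have := hlo y y1 y2
      omega
    obtain ⟨z, z1, z2, z3, z4⟩ := hs j (by omega) (by omega) ej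
    by_cases ei : i = b
    · by_cases hk0 : k = 0
      · obtain ⟨j0, j1, j2, j3⟩ := h.all y y1 y2 (by omega)
        omega
      · have := hst (by omega)
        have := h.F z y z1 (by omega) (by omega) y2 (by omega)
        omega
    · obtain ⟨t, t1, t2, t3, t4⟩ := hs i (by omega) (by omega) ei
      exact h.P2 t z y t1 (by omega) (by omega) y2 (by omega) (by omega) (by omega)
  · intro j j1 j2
    by_cases ej : j = k + 1
    · subst ej
      refine ⟨b, by omega, by push_cast; omega, by rw [hvb]; push_cast; rfl, ?_⟩
      rw [Finset.filter_true_of_mem, Int.card_Ico]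
      · rw [show d + 1 - (k + 1) = d - k by omega, ← hl]; push_cast; omega
      · intro x hxx
        rw [Finset.mem_Ico] at hxx
        obtain ⟨y, y1, y2, y3, y4⟩ := hs x (by omega) (by omega) (by omega)
        have := hlo y y1 y2
        push_cast
        omega
    · obtain ⟨q, q1, q2, q3, q4⟩ := h.code j j1 (by omega)
      by_cases e : q < b
      · refine ⟨q, q1, by push_cast; omega, ?_, ?_⟩
        · rw [hx q q1, if_neg (by omega), if_neg (by omega), q3]
        · rw [← q4]
          congr 3
          apply Finset.filter_congr
          intro x hxx
          rw [Finset.mem_Ico] at hxx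
          rw [hx x (by omega), if_neg (by omega), if_neg (by omega)]
      · refine ⟨q + 1, by omega, by push_cast; omega, ?_, ?_⟩
        · rw [hx _ (by omega), if_neg (by omega), if_pos (by omega), add_sub_cancel_right, q3]
        · rw [← q4]
          congr 2
          symm
          apply Finset.card_bij (fun (x : ℤ) _ => if x < (b : ℤ) then x else x + 1)
          · intro x hxx
            rw [Finset.mem_filter, Finset.mem_Ico] at hxx
            rw [Finset.mem_filter, Finset.mem_Ico]
            obtain ⟨⟨x1, x2⟩, x3⟩ := hxx
            split_ifs with e2
            · refine ⟨⟨x1, by omega⟩, ?_⟩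
              rw [hx x x1, if_neg (by omega), if_neg (by omega)]; exact x3
            · refine ⟨⟨by omega, by omega⟩, ?_⟩
              rw [hx _ (by omega), if_neg (by omega), if_pos (by omega), add_sub_cancel_right]; exact x3
          · intro x _ y _ hxy
            split_ifs at hxy <;> omega
          · intro x hxx
            rw [Finset.mem_filter, Finset.mem_Ico] at hxx
            obtain ⟨⟨x1, x2⟩, x3⟩ := hxx
            have ex : x ≠ b := by rintro rfl; omega
            obtain ⟨y, y1, y2, y3, y4⟩ := hs x x1 (by omega) ex
            refine ⟨y, ?_, ?_⟩
            · rw [Finset.mem_filter, Finset.mem_Ico]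
              refine ⟨⟨y1, by omega⟩, by omega⟩
            · split_ifs <;> omega
  · intro q q1 q2 hq
    push_cast at q2
    by_cases e : q = b
    · exact ⟨k + 1, by omega, le_rfl, by rw [e, hvb]; push_cast; rfl⟩
    · obtain ⟨y, y1, y2, y3, _⟩ := hs q q1 (by omega) e
      obtain ⟨j, j1, j2, j3⟩ := h.all y y1 y2 (by omega)
      exact ⟨j, j1, by omega, by omega⟩
  · intro y z y1 hy yz z1 hz
    push_cast at z1
    rw [Nat.add_sub_add_right, ← hl] at hy
    push_cast at hy
    obtain ⟨t, t1, t2, t3, t4⟩ := hs z (by omega) (by omega) (by omega)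
    by_cases e : y = b
    · rw [e, hvb]
      have := hlo t t1 t2
      omega
    · obtain ⟨x, x1, x2, x3, x4⟩ := hs y (by omega) (by omega) e
      by_cases hk0 : k = 0
      · obtain ⟨j0, j1, j2, j3⟩ := h.all t t1 t2 (by omega)
        omega
      · have := hst (by omega)
        have := h.F x t x1 (by omega) (by omega) t2 (by omega)
        omega

theorem part_lb {d : ℕ} {lam : ℕ → ℕ} (h : IsStrictPartition d lam) (k : ℕ) : k < d → k + 1 ≤ lam (d - k) := by
  induction k with
  | zero => intro _; exact h.2
  | succ k ih =>
    intro hk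
    have h1 := ih (by omega)
    have h2 := h.1 (d - (k + 1)) (by omega) (by omega)
    rw [show d - (k + 1) + 1 = d - k by omega] at h2
    omega

def Rn (d r : ℕ) (lam : ℕ → ℕ) (k : ℕ) : List ℕ :=
  (List.range (muF d r lam (k + 1))).map fun t => d + r - (k + 1) - muF d r lam (k + 1) + 1 + t

theorem In.init {d r : ℕ} {lam : ℕ → ℕ} (hlam : IsStrictPartition d lam)
    (hsub : ∀ i : ℕ, 1 ≤ i → i ≤ d → lam i ≤ Zlam d r i)
    {w : Equiv.Perm ℤ} (hw : IsWdr d r w) (k : ℕ) : k ≤ d →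
    In d r k lam (w * wordProd ((List.range' (d - k) k).flatMap (Rn d r lam)).reverse) := by
  induction k with
  | zero =>
    intro _
    have e : w * wordProd ((List.range' (d - 0) 0).flatMap (Rn d r lam)).reverse = w := by
      simp [wordProd]
    rw [e]
    obtain ⟨h1, h2, h3⟩ := hw
    have hpos : ∀ x : ℤ, 1 ≤ x → x ≤ r + (0 : ℕ) → w x = d + x := by
      intro x x1 x2
      exact h2 x x1 (by push_cast at x2; omega)
    refine ⟨?_, ?_, ?_, ?_, ?_, ?_, ?_, ?_⟩
    · intro x x1 x2
      exact h3 x (by push_cast at x1; omega) (by omega)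
    · intro x x1
      exact h1.2 x (by rw [abs_of_pos (by omega)]; push_cast; omega)
    · intro x x1 x2
      rw [hpos x x1 x2]; push_cast at x2; omega
    · intro i j i1 ij j1 _
      rw [hpos i i1 (by omega), hpos j (by omega) j1]; omega
    · intro i j l i1 ij jl l1 _ h _
      rw [hpos l (by omega) l1] at h; omega
    · intro j j1 j2; omega
    · intro q q1 q2 h
      rw [hpos q q1 q2] at h; omega
    · intro y z y1 _ yz z1 h
      rw [hpos z (by omega) z1] at h; omega
  | succ k ih =>
    intro hk
    have H := ih (by omega)
    have e : (List.range' (d - (k + 1)) (k + 1)).flatMap (Rn d r lam) =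
        Rn d r lam (d - (k + 1)) ++ (List.range' (d - k) k).flatMap (Rn d r lam) := by
      rw [List.range'_succ, List.flatMap_cons, show d - (k + 1) + 1 = d - k by omega]
    rw [e, List.reverse_append, wordProd_append, ← mul_assoc]
    have h1 := part_lb hlam k (by omega)
    have h2 := hsub (d - k) (by omega) (by omega)
    unfold Rn
    rw [show d - (k + 1) + 1 = d - k by omega]
    unfold Zlam at h2
    have hmu : muF d r lam (d - k) = r + 2 * d + 1 - 2 * (d - k) - lam (d - k) := rfl
    apply H.step (by omega)
    · omega
    · omega
    · omega
    · intro hk1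
      have := hlam.1 (d - k) (by omega) (by omega)
      rw [show d - k + 1 = d + 1 - k by omega] at this
      exact this

theorem red_aux {d r : ℕ} {lam : ℕ → ℕ} (hlam : IsStrictPartition d lam)
    (hsub : ∀ i : ℕ, 1 ≤ i → i ≤ d → lam i ≤ Zlam d r i)
    {w : Equiv.Perm ℤ} (hw : IsWdr d r w) :
    Nat.card {L : List ℕ //
        IsReducedWord (d + r) (w * wordProd (aLamWord d r lam).reverse) L} =
      Nat.card {B : ℤ × ℤ → ℕ // IsSYT d lam B} := by
  have hWS : WS d lam := fun i i1 i2 => Or.inl (hlam.1 i i1 i2)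
  have H := In.init hlam hsub hw d le_rfl
  have e : (List.range' (d - d) d).flatMap (Rn d r lam) = aLamWord d r lam := by
    rw [Nat.sub_self, ← List.range_eq_range']; rfl
  rw [e] at H
  have hsg : IsSignedPerm (d + r) (w * wordProd (aLamWord d r lam).reverse) := by
    have h1 := hw.1
    have h2 : IsSignedPerm (d + r) (wordProd (aLamWord d r lam).reverse) := by
      apply signed_word
      intro a ha
      rw [List.mem_reverse] at ha
      unfold aLamWord at ha
      rw [List.mem_flatMap] at ha
      obtain ⟨k, hk, ha⟩ := ha
      rw [List.mem_range] at hk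
      rw [List.mem_map] at ha
      obtain ⟨t, ht, rfl⟩ := ha
      rw [List.mem_range] at ht
      have h1 := part_lb hlam (d - (k + 1)) (by omega)
      rw [show d - (d - (k + 1)) = k + 1 by omega] at h1
      have h2 := hsub (k + 1) (by omega) (by omega)
      unfold Zlam at h2
      have hmu : muF d r lam (k + 1) = r + 2 * d + 1 - 2 * (k + 1) - lam (k + 1) := rfl
      omega
    refine ⟨fun i => ?_, fun i hi => ?_⟩
    · rw [Equiv.Perm.mul_apply, Equiv.Perm.mul_apply, h2.1, h1.1]
    · rw [Equiv.Perm.mul_apply, h2.2 i hi, h1.2 i hi]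
  generalize w * wordProd (aLamWord d r lam).reverse = W at *
  have hC : Cl (d + r) d W lam (fun i => (d : ℤ) + 1 - i) := by
    refine ⟨hsg, ?_, ?_, ?_, ?_, ?_⟩
    · intro i j i1 ij hj
      by_cases ej : j ≤ r + d
      · exact H.P1 i j i1 ij ej hj
      · rw [H.hi j (by omega)]
        by_cases ei : i ≤ r + d
        · have := H.le i i1 ei; omega
        · rw [H.hi i (by omega)]; exact ij
    · intro i j l i1 ij jl g1 g2 g3
      by_cases el : l ≤ r + d
      · exact H.P2 i j l i1 ij jl el g1 g2 g3
      · rw [H.hi l (by omega)] at g2; omega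
    · intro i i1 i2; omega
    · intro i i1 i2
      obtain ⟨q, q1, q2, q3, q4⟩ := H.code (d + 1 - i) (by omega) (by omega)
      have ec : ((d + 1 - i : ℕ) : ℤ) = (d : ℤ) + 1 - i := by omega
      rw [show d + 1 - (d + 1 - i) = i by omega] at q4
      rw [ec] at q3 q4
      exact ⟨q, q1, q3, q4⟩
    · intro q q1 hq
      by_cases eq : q ≤ r + d
      · obtain ⟨j, j1, j2, j3⟩ := H.all q q1 eq hq
        exact ⟨d + 1 - j, by omega, by omega, by rw [j3]; omega⟩
      · rw [H.hi q (by omega)] at hq; omega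
  obtain ⟨n', u, hG, hR⟩ := hC.chain hWS _ rfl
  obtain ⟨c1, c2⟩ := red_card hsg
  rw [hR, hG.R] at c1 c2
  by_cases em : fI (d + r) W = sizeP d lam
  · rw [if_pos em, em] at c1
    rw [SF_syt hWS]
    exact_mod_cast c1
  · rw [if_neg em] at c2; exact absurd rfl c2


/-- `|Red(w^λ)| = |SYT(λ)|`. -/
theorem red_wlam_card_eq_syt_card (d r : ℕ) (hd : 1 ≤ d)
    (lam : ℕ → ℕ) (hlam : IsStrictPartition d lam)
    (hsub : ∀ i : ℕ, 1 ≤ i → i ≤ d → lam i ≤ Zlam d r i)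
    (w : Equiv.Perm ℤ) (hw : IsWdr d r w) :
    Nat.card {L : List ℕ //
        IsReducedWord (d + r) (w * wordProd (aLamWord d r lam).reverse) L} =
      Nat.card {B : ℤ × ℤ → ℕ // IsSYT d lam B} := by
  exact red_aux hlam hsub hw

end BST
end

section
/- Let λ be a strict partition with d parts, N = |λ|, and fix i ∈ {1,…,d} such that either i = 1 or λ_{i−1} ≥ λ_i + 3. Let λ^# be the strict partition obtained from λ by replacing λ_i with λ_i + 1, and let j = λ_i + i − d, so that D(λ^#) ∖ D(λ) = {(i,j)}; under the hypothesis, columns j and j+1 of D(λ) each consist exactly of the boxes in rows 1, …, i−1. For B ∈ BS(λ), define the filling B^# of D(λ^#) by: B^#(a,j) = B(a,j+1) and B^#(a,j+1) = B(a,j) for all 1 ≤ a ≤ i−1; B^#(i,j) = N+1; and B^# = B on all other boxes. Then B^# is a balanced shifted tableau of shape λ^#, and the map f_i : B ↦ B^# is a bijection from BS(λ) onto {T ∈ BS(λ^#) : T(i,j) = N+1}. -/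
open scoped BigOperators

namespace BST

/-- column swap -/
def sg (i j : ℤ) (p : ℤ × ℤ) : ℤ × ℤ :=
  if 1 ≤ p.1 ∧ p.1 < i ∧ p.2 = j then (p.1, j + 1)
  else if 1 ≤ p.1 ∧ p.1 < i ∧ p.2 = j + 1 then (p.1, j) else p

lemma sg_sg (i j : ℤ) (p : ℤ × ℤ) : sg i j (sg i j p) = p := by
  obtain ⟨a, c⟩ := p
  unfold sg
  split_ifs <;> simp_all

lemma sg_inj (i j : ℤ) : Function.Injective (sg i j) :=
  Function.LeftInverse.injective (g := sg i j) (sg_sg i j)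

lemma addBox_eq (d : ℕ) (lam : ℕ → ℕ) (i N : ℕ) (j : ℤ)
    (hj : j = (lam i : ℤ) + i - d) (B : ℤ × ℤ → ℕ) (p : ℤ × ℤ) :
    addBox d lam i N B p = if p = ((i : ℤ), j) then N + 1 else B (sg i j p) := by
  obtain ⟨a, c⟩ := p
  unfold addBox sg
  rw [← hj]
  by_cases h0 : (a, c) = ((i : ℤ), j)
  · simp [h0]
  · simp only [h0, if_false]
    by_cases h1 : 1 ≤ a ∧ a < (i : ℤ) ∧ c = j
    · simp [h1]
    · by_cases h2 : 1 ≤ a ∧ a < (i : ℤ) ∧ c = j + 1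
      · simp [h2]
      · simp [h1, h2]

structure Ctx (d : ℕ) (lam : ℕ → ℕ) (i : ℕ) (j : ℤ) : Prop where
  hi1 : 1 ≤ i
  hid : i ≤ d
  hj : j = (lam i : ℤ) + i - d
  hjp : 1 ≤ j
  up : ∀ a : ℤ, 1 ≤ a → a < i → j + d + 2 ≤ (lam a.toNat : ℤ) + a
  dn : ∀ a : ℤ, (i : ℤ) ≤ a → a ≤ d → (lam a.toNat : ℤ) + a ≤ j + d

lemma mono_aux (d : ℕ) (lam : ℕ → ℕ) (hlam : IsStrictPartition d lam) (a k : ℕ)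
    (ha : 1 ≤ a) (hk : a + k ≤ d) : lam (a + k) + k ≤ lam a := by
  induction k with
  | zero => simp
  | succ k ih =>
    have h1 := ih (by omega)
    have h2 := hlam.1 (a + k) (by omega) (by omega)
    rw [show a + (k + 1) = a + k + 1 by omega]
    omega

lemma mkCtx (d : ℕ) (lam : ℕ → ℕ) (hlam : IsStrictPartition d lam)
    (i : ℕ) (hi1 : 1 ≤ i) (hid : i ≤ d)
    (hcond : i = 1 ∨ lam i + 3 ≤ lam (i - 1)) :
    Ctx d lam i ((lam i : ℤ) + i - d) := by
  refine ⟨hi1, hid, rfl, ?_, ?_, ?_⟩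
  · have h := mono_aux d lam hlam i (d - i) hi1 (by omega)
    rw [show i + (d - i) = d by omega] at h
    have := hlam.2
    omega
  · intro a h1 h2
    lift a to ℕ using by omega
    have h := mono_aux d lam hlam a (i - 1 - a) (by omega) (by omega)
    rw [show a + (i - 1 - a) = i - 1 by omega] at h
    simp only [Int.toNat_natCast]
    omega
  · intro a h1 h2
    lift a to ℕ using by omega
    have h := mono_aux d lam hlam i (a - i) (by omega) (by omega)
    rw [show i + (a - i) = a by omega] at h
    simp only [Int.toNat_natCast]
    omega

variable {d : ℕ} {lam : ℕ → ℕ} {i : ℕ} {j : ℤ}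

lemma step_val (a : ℤ) (ha : 1 ≤ a) :
    ((stepShape lam i a.toNat : ℕ) : ℤ) = if a = i then (lam a.toNat : ℤ) + 1 else lam a.toNat := by
  unfold stepShape
  lift a to ℕ using by omega
  simp only [Int.toNat_natCast, Nat.cast_inj]
  split_ifs with h
  · subst h; simp
  · rfl

lemma Ctx.new_not (h : Ctx d lam i j) : ((i : ℤ), j) ∉ Diagram d lam := by
  have := h.hj
  simp [Diagram]; omega

lemma Ctx.diag_step (h : Ctx d lam i j) :
    Diagram d (stepShape lam i) = insert ((i : ℤ), j) (Diagram d lam) := by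
  ext ⟨a, c⟩
  have := h.hj
  have h1 := h.hi1
  have h2 := h.hid
  have h3 := h.hjp
  simp only [Diagram, Set.mem_ofPred_eq, Set.mem_insert_iff, Prod.mk.injEq]
  by_cases ha : 1 ≤ a
  · rw [step_val a ha]
    by_cases hai : a = i
    · subst hai
      rw [if_pos rfl]
      simp only [Int.toNat_natCast, true_and]
      omega
    · simp [hai]
  · omega

lemma Ctx.sg_diag (h : Ctx d lam i j) (p : ℤ × ℤ) :
    sg i j p ∈ Diagram d lam ↔ p ∈ Diagram d lam := by
  obtain ⟨a, c⟩ := p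
  have h1 := h.hi1
  have h2 := h.hid
  have h3 := h.hjp
  unfold sg
  simp only
  split_ifs with h4 h5
  · have := h.up a h4.1 h4.2.1
    simp only [Diagram, Set.mem_ofPred_eq]; omega
  · have := h.up a h5.1 h5.2.1
    simp only [Diagram, Set.mem_ofPred_eq]; omega
  · rfl

lemma Ctx.size_step (h : Ctx d lam i j) :
    sizeP d (stepShape lam i) = sizeP d lam + 1 := by
  have hm : i ∈ Finset.Icc 1 d := Finset.mem_Icc.2 ⟨h.hi1, h.hid⟩
  unfold sizeP
  rw [← Finset.add_sum_erase _ _ hm, ← Finset.add_sum_erase _ lam hm]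
  have : ∑ x ∈ (Finset.Icc 1 d).erase i, stepShape lam i x = ∑ x ∈ (Finset.Icc 1 d).erase i, lam x :=
    Finset.sum_congr rfl (fun x hx => by simp [stepShape, Finset.ne_of_mem_erase hx])
  rw [this]; simp [stepShape]; omega

lemma Ctx.sg_new (_h : Ctx d lam i j) (p : ℤ × ℤ) :
    sg i j p = ((i : ℤ), j) ↔ p = ((i : ℤ), j) := by
  have : sg i j ((i : ℤ), j) = ((i : ℤ), j) := by simp [sg]
  constructor
  · intro h
    rw [← this] at h
    exact sg_inj _ _ h
  · rintro rfl; exact this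

lemma Ctx.fill (h : Ctx d lam i j) (B T : ℤ × ℤ → ℕ)
    (hT : ∀ p, T p = if p = ((i : ℤ), j) then sizeP d lam + 1 else B (sg i j p))
    (hB : B ((i : ℤ), j) = 0) :
    IsFilling d lam B ↔ IsFilling d (stepShape lam i) T := by
  have hn := h.new_not
  have hTn : T ((i : ℤ), j) = sizeP d lam + 1 := by rw [hT]; simp
  have hTo : ∀ p, p ≠ ((i : ℤ), j) → T p = B (sg i j p) := fun p hp => by rw [hT]; simp [hp]
  have hne : ∀ p ∈ Diagram d lam, p ≠ ((i : ℤ), j) := fun p hp e => hn (e ▸ hp)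
  unfold IsFilling
  rw [h.diag_step, h.size_step]
  constructor
  · rintro ⟨⟨m, inj, sur⟩, z⟩
    refine ⟨⟨?_, ?_, ?_⟩, ?_⟩
    · rintro p (rfl | hp)
      · rw [hTn]; simp
      · rw [hTo p (hne p hp)]
        have := m ((h.sg_diag p).2 hp)
        simp only [Set.mem_Icc] at *; omega
    · have key : ∀ p ∈ Diagram d lam, T p ≤ sizeP d lam := fun p hp => by
        rw [hTo p (hne p hp)]; exact (m ((h.sg_diag p).2 hp)).2
      rintro p (rfl | hp) q (rfl | hq) e
      · rfl
      · have := key q hq; omega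
      · have := key p hp; omega
      · rw [hTo p (hne p hp), hTo q (hne q hq)] at e
        exact sg_inj _ _ (inj ((h.sg_diag p).2 hp) ((h.sg_diag q).2 hq) e)
    · rintro v ⟨h1, h2⟩
      by_cases hv : v = sizeP d lam + 1
      · exact ⟨_, Or.inl rfl, by rw [hTn, hv]⟩
      · obtain ⟨p, hp, e⟩ := sur (⟨h1, by omega⟩ : v ∈ Set.Icc 1 (sizeP d lam))
        have hp' : sg i j p ∈ Diagram d lam := (h.sg_diag p).2 hp
        exact ⟨sg i j p, Or.inr hp', by rw [hTo _ (hne _ hp'), sg_sg, e]⟩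
    · intro p hp
      rw [Set.mem_insert_iff, not_or] at hp
      rw [hTo p hp.1]
      exact z _ (fun h' => hp.2 ((h.sg_diag p).1 h'))
  · rintro ⟨⟨m, inj, sur⟩, z⟩
    have hBo : ∀ p ∈ Diagram d lam, B p = T (sg i j p) := fun p hp => by
      rw [hTo _ (hne _ ((h.sg_diag p).2 hp)), sg_sg]
    refine ⟨⟨?_, ?_, ?_⟩, ?_⟩
    · intro p hp
      have hp' := (h.sg_diag p).2 hp
      rw [hBo p hp]
      have h1 := m (Or.inr hp')
      have h2 : T (sg i j p) ≠ sizeP d lam + 1 := fun e =>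
        hne _ hp' (inj (Or.inr hp') (Or.inl rfl) (e.trans hTn.symm))
      simp only [Set.mem_Icc] at *; omega
    · intro p hp q hq e
      rw [hBo p hp, hBo q hq] at e
      exact sg_inj _ _ (inj (Or.inr ((h.sg_diag p).2 hp)) (Or.inr ((h.sg_diag q).2 hq)) e)
    · rintro v ⟨h1, h2⟩
      obtain ⟨p, hp | hp, e⟩ := sur (⟨h1, by omega⟩ : v ∈ Set.Icc 1 (sizeP d lam + 1))
      · rw [hp, hTn] at e; omega
      · exact ⟨sg i j p, (h.sg_diag p).2 hp, by rw [← hTo p (hne p hp), e]⟩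
    · intro p hp
      by_cases hpn : p = ((i : ℤ), j)
      · rw [hpn, hB]
      · have h1 : sg i j p ≠ ((i : ℤ), j) := fun e => hpn ((h.sg_new p).1 e)
        have := hTo _ h1
        rw [sg_sg] at this
        rw [← this]
        apply z
        rw [Set.mem_insert_iff, not_or]
        exact ⟨h1, fun h' => hp ((h.sg_diag p).1 h')⟩

/-- the set counted in the balance condition -/
def SB (d : ℕ) (lam : ℕ → ℕ) (B : ℤ × ℤ → ℕ) (p : ℤ × ℤ) : Set (ℤ × ℤ) :=
  {q ∈ ExtHook d lam p.1 p.2 | B p < ExtFilling d B q}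

lemma finHook (hf : (Diagram d lam).Finite) (a c : ℤ) : (ExtHook d lam a c).Finite := by
  unfold ExtHook Hook
  refine Set.Finite.union (Set.Finite.union (Set.Finite.union (Set.finite_singleton _) ?_) ?_) ?_
  · exact hf.subset (fun _ h => h.1)
  · exact hf.subset (fun _ h => h.1)
  · exact (Set.finite_singleton ((d : ℤ) + 1 + c, c)).subset (fun _ h => h.2)

/-- whether the new box is in the hook -/
def NewIn (d i : ℕ) (j : ℤ) (p : ℤ × ℤ) : Prop :=
  (p.1 = i ∧ p.2 < j) ∨ (p.2 = j ∧ p.1 < i) ∨ (p.2 < 0 ∧ (i : ℤ) = d + 1 + p.2)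

lemma Ctx.hook_step (h : Ctx d lam i j) (p q : ℤ × ℤ) :
    q ∈ ExtHook d (stepShape lam i) p.1 p.2 ↔
      q ∈ ExtHook d lam p.1 p.2 ∨ (q = ((i : ℤ), j) ∧ NewIn d i j p) := by
  obtain ⟨a, c⟩ := p
  obtain ⟨b, e⟩ := q
  have := h.hjp
  have hn := h.new_not
  simp only [ExtHook, Hook, h.diag_step, NewIn, Set.mem_union, Set.mem_singleton_iff,
    Set.mem_ofPred_eq, Set.mem_insert_iff, Prod.mk.injEq]
  by_cases hb : b = i ∧ e = j
  · obtain ⟨rfl, rfl⟩ := hb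
    simp only [hn]
    simp
    grind
  · simp [hb]

lemma Ctx.hook_sg (h : Ctx d lam i j) (p q : ℤ × ℤ) (hp : p ∈ Diagram d lam)
    (hs : ¬ (p.1 < i ∧ (p.2 = j ∨ p.2 = j + 1))) :
    sg i j q ∈ ExtHook d lam p.1 p.2 ↔ q ∈ ExtHook d lam p.1 p.2 := by
  have hd := h.sg_diag q
  have := h.hjp
  by_cases hq : sg i j q = q
  · rw [hq]
  obtain ⟨a, c⟩ := p
  obtain ⟨b, e⟩ := q
  have hup := h.up b
  have hdn := h.dn a
  simp only [Diagram, Set.mem_ofPred_eq] at hp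
  unfold sg at *
  simp only at *
  simp only [ExtHook, Hook, Set.mem_union, Set.mem_singleton_iff,
    Set.mem_ofPred_eq]
  split_ifs at * with h4 h5
  · rw [hd]; simp only [Prod.mk.injEq]; grind
  · rw [hd]; simp only [Prod.mk.injEq]; grind
  · simp at hq

lemma Ctx.ext_sg (h : Ctx d lam i j) (B T : ℤ × ℤ → ℕ) (N : ℕ)
    (hT : ∀ p, T p = if p = ((i : ℤ), j) then N + 1 else B (sg i j p))
    (q : ℤ × ℤ) (hq : q ≠ ((i : ℤ), j)) :
    ExtFilling d T q = ExtFilling d B (sg i j q) := by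
  obtain ⟨a, c⟩ := q
  have := h.hjp
  have := h.hid
  have h0 : T (a, 0) = B (a, 0) := by
    rw [hT]
    have e1 : (a, (0 : ℤ)) ≠ ((i : ℤ), j) := by simp; omega
    have e2 : sg i j (a, 0) = (a, 0) := by
      unfold sg
      simp; split_ifs <;> grind
    simp [e1, e2]
  have h1 : T (a, c) = B (sg i j (a, c)) := by rw [hT]; simp [hq]
  unfold ExtFilling
  rw [h1]
  simp only [h0]
  unfold sg
  grind

lemma Ctx.ext_new (h : Ctx d lam i j) (T : ℤ × ℤ → ℕ) :
    ExtFilling d T ((i : ℤ), j) = T ((i : ℤ), j) := by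
  have := h.hjp
  have := h.hid
  unfold ExtFilling
  rw [if_neg]
  simp; omega

lemma mem_image_sg (k l : ℤ) (S : Set (ℤ × ℤ)) (q : ℤ × ℤ) :
    q ∈ sg k l '' S ↔ sg k l q ∈ S := by
  constructor
  · rintro ⟨r, hr, rfl⟩; rwa [sg_sg]
  · intro hq; exact ⟨_, hq, sg_sg _ _ _⟩

lemma mem_SB (B : ℤ × ℤ → ℕ) (p q : ℤ × ℤ) :
    q ∈ SB d lam B p ↔ q ∈ ExtHook d lam p.1 p.2 ∧ B p < ExtFilling d B q := Iff.rfl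

lemma new_not_hook (h : Ctx d lam i j) (p : ℤ × ℤ) (hp : p ∈ Diagram d lam) :
    ((i : ℤ), j) ∉ ExtHook d lam p.1 p.2 := by
  have hn := h.new_not
  have := h.hjp
  obtain ⟨a, c⟩ := p
  simp only [ExtHook, Hook, Set.mem_union, Set.mem_singleton_iff, Set.mem_ofPred_eq, Prod.mk.injEq, hn]
  rintro (((⟨h1, h2⟩ | h1) | h1) | h1)
  · exact hn (by rw [h1, h2]; exact hp)
  · exact h1.1
  · exact h1.1
  · omega

lemma Ctx.fixed (h : Ctx d lam i j) (p : ℤ × ℤ)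
    (hs : ¬ (p.1 < i ∧ (p.2 = j ∨ p.2 = j + 1))) : sg i j p = p := by
  have := h.hjp
  unfold sg
  grind

open Classical in
lemma Ctx.count_gen (h : Ctx d lam i j) (B T : ℤ × ℤ → ℕ) (N : ℕ)
    (hT : ∀ p, T p = if p = ((i : ℤ), j) then N + 1 else B (sg i j p))
    (hf : (Diagram d lam).Finite)
    (p : ℤ × ℤ) (hp : p ∈ Diagram d lam) (hN : B p ≤ N)
    (hs : ¬ (p.1 < i ∧ (p.2 = j ∨ p.2 = j + 1))) :
    (SB d (stepShape lam i) T p).ncard =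
      (SB d lam B p).ncard + if NewIn d i j p then 1 else 0 := by
  have hpn : p ≠ ((i : ℤ), j) := fun e => h.new_not (e ▸ hp)
  have hTp : T p = B p := by rw [hT, if_neg hpn, h.fixed p hs]
  have hTn : T ((i : ℤ), j) = N + 1 := by rw [hT]; simp
  have hnn := new_not_hook h p hp
  have hfix : sg i j ((i : ℤ), j) = ((i : ℤ), j) := (h.sg_new _).2 rfl
  have key : ∀ q, q ∈ SB d (stepShape lam i) T p ↔
      (q = ((i : ℤ), j) ∧ NewIn d i j p) ∨ q ∈ sg i j '' SB d lam B p := by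
    intro q
    rw [mem_image_sg, mem_SB, mem_SB, h.hook_step, hTp]
    by_cases hq : q = ((i : ℤ), j)
    · subst hq
      rw [h.ext_new, hTn, hfix]
      simp only [hnn]
      simp
      omega
    · rw [h.ext_sg B T N hT q hq, h.hook_sg p q hp hs]
      simp [hq]
  have hfin : (sg i j '' SB d lam B p).Finite :=
    ((finHook hf p.1 p.2).subset (fun _ h => h.1)).image _
  have hc : (sg i j '' SB d lam B p).ncard = (SB d lam B p).ncard :=
    Set.ncard_image_of_injective _ (sg_inj _ _)
  split_ifs with hnw
  · have : SB d (stepShape lam i) T p = insert ((i : ℤ), j) (sg i j '' SB d lam B p) := by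
      ext q; rw [key, Set.mem_insert_iff]; simp [hnw]
    rw [this, Set.ncard_insert_of_notMem _ hfin, hc]
    rw [mem_image_sg, hfix]
    exact fun h' => hnn h'.1
  · have : SB d (stepShape lam i) T p = (sg i j '' SB d lam B p) := by
      ext q; rw [key]; simp [hnw]
    rw [this, hc]; rfl

open Classical in
lemma Ctx.rk_gen (h : Ctx d lam i j) (p : ℤ × ℤ) (hp : p ∈ Diagram d lam)
    (hs : ¬ (p.1 < i ∧ (p.2 = j ∨ p.2 = j + 1))) :
    rk d (stepShape lam i) p.1 p.2 = rk d lam p.1 p.2 + if NewIn d i j p then 1 else 0 := by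
  obtain ⟨a, c⟩ := p
  have := h.hj
  have h1 := h.hi1
  have h2 := h.hid
  have h3 := h.hjp
  have hdn := h.dn a
  simp only [Diagram, Set.mem_ofPred_eq] at hp
  unfold rk NewIn
  simp only at *
  rw [step_val a hp.1, step_val (d + 1 + c) (by omega)]
  split_ifs <;> grind

/-- row part and column part -/
def RX (d : ℕ) (lam : ℕ → ℕ) (B : ℤ × ℤ → ℕ) (a j k : ℤ) (v : ℕ) : Set (ℤ × ℤ) :=
  {q | q ∈ Diagram d lam ∧ ((q.1 = a ∧ j + 1 < q.2) ∨ (q.2 = k ∧ a < q.1)) ∧ v < B q}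

lemma mem_hook_pos (a c : ℤ) (hc : 0 ≤ c) (q : ℤ × ℤ) :
    q ∈ ExtHook d lam a c ↔ q = (a, c) ∨
      (q ∈ Diagram d lam ∧ ((q.1 = a ∧ c < q.2) ∨ (q.2 = c ∧ a < q.1))) := by
  have : ¬ c < 0 := by omega
  simp [ExtHook, Hook, this]
  tauto

lemma ext_pos (B : ℤ × ℤ → ℕ) (q : ℤ × ℤ) (hq : q.1 ≤ d) (hc : 0 ≤ q.2) :
    ExtFilling d B q = B q := by
  unfold ExtFilling
  rw [if_neg]; omega

lemma mem_SB_pos (B : ℤ × ℤ → ℕ) (a c : ℤ) (hc : 0 ≤ c) (had : a ≤ d) (q : ℤ × ℤ) :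
    q ∈ SB d lam B (a, c) ↔
      q ∈ Diagram d lam ∧ ((q.1 = a ∧ c < q.2) ∨ (q.2 = c ∧ a < q.1)) ∧ B (a, c) < B q := by
  rw [mem_SB, mem_hook_pos a c hc]
  constructor
  · rintro ⟨rfl | h1, h2⟩
    · rw [ext_pos _ _ had hc] at h2; simp at h2
    · refine ⟨h1.1, h1.2, ?_⟩
      rwa [ext_pos _ _ h1.1.2.1 (by omega)] at h2
  · rintro ⟨h1, h2, h3⟩
    exact ⟨Or.inr ⟨h1, h2⟩, by rwa [ext_pos _ _ h1.2.1 (by omega)]⟩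

lemma finRX (hf : (Diagram d lam).Finite) (B : ℤ × ℤ → ℕ) (a j k : ℤ) (v : ℕ) :
    (RX d lam B a j k v).Finite := hf.subset (fun _ h => h.1)

lemma Ctx.memd (h : Ctx d lam i j) (a : ℤ) (ha : 1 ≤ a) (hai : a < i) :
    (a, j) ∈ Diagram d lam ∧ (a, j + 1) ∈ Diagram d lam := by
  have := h.up a ha hai
  have := h.hid
  have := h.hjp
  simp only [Diagram, Set.mem_ofPred_eq]
  omega

lemma Ctx.cB0 (h : Ctx d lam i j) (hf : (Diagram d lam).Finite) (B : ℤ × ℤ → ℕ)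
    (a : ℤ) (ha : 1 ≤ a) (hai : a < i) :
    (SB d lam B (a, j)).ncard = (RX d lam B a j j (B (a, j))).ncard +
      if B (a, j) < B (a, j + 1) then 1 else 0 := by
  have h1 := h.hjp
  have h2 := h.hid
  have hm := h.memd a ha hai
  split_ifs with hlt
  · have : SB d lam B (a, j) = insert (a, j + 1) (RX d lam B a j j (B (a, j))) := by
      ext ⟨b, c⟩
      rw [mem_SB_pos B a j (by omega) (by omega)]
      simp only [RX, Set.mem_insert_iff, Set.mem_ofPred_eq, Prod.mk.injEq]
      grind
    rw [this, Set.ncard_insert_of_notMem _ (finRX hf _ _ _ _ _)]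
    simp [RX]
  · congr 1
    ext ⟨b, c⟩
    rw [mem_SB_pos B a j (by omega) (by omega)]
    simp only [RX, Set.mem_ofPred_eq]
    grind

lemma Ctx.cB1 (h : Ctx d lam i j) (B : ℤ × ℤ → ℕ)
    (a : ℤ) (hai : a < i) :
    (SB d lam B (a, j + 1)).ncard = (RX d lam B a j (j + 1) (B (a, j + 1))).ncard := by
  have h1 := h.hjp
  have h2 := h.hid
  congr 1
  ext ⟨b, c⟩
  rw [mem_SB_pos B a _ (by omega) (by omega)]
  simp only [RX, Set.mem_ofPred_eq]

lemma sg0 (k l a : ℤ) (ha : 1 ≤ a) (hai : a < k) : sg k l (a, l) = (a, l + 1) := by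
  simp [sg, ha, hai]

lemma sg1 (k l a : ℤ) (ha : 1 ≤ a) (hai : a < k) : sg k l (a, l + 1) = (a, l) := by
  simp [sg, ha, hai]

lemma Ctx.cT1 (h : Ctx d lam i j) (B T : ℤ × ℤ → ℕ) (N : ℕ)
    (hT : ∀ p, T p = if p = ((i : ℤ), j) then N + 1 else B (sg i j p))
    (a : ℤ) (ha : 1 ≤ a) (hai : a < i) :
    (SB d (stepShape lam i) T (a, j + 1)).ncard = (RX d lam B a j j (B (a, j))).ncard := by
  have h1 := h.hjp
  have h2 := h.hid
  have hv : T (a, j + 1) = B (a, j) := by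
    rw [hT, if_neg (by simp), sg1 _ _ _ ha hai]
  rw [← Set.ncard_image_of_injective (RX d lam B a j j (B (a, j))) (sg_inj (i : ℤ) j)]
  congr 1
  ext ⟨b, c⟩
  rw [mem_SB_pos T a _ (by omega) (by omega), mem_image_sg, h.diag_step, hv, hT]
  have hn := h.new_not
  have hd := h.sg_diag (b, c)
  have hdn := h.dn b
  by_cases hq : (b, c) = ((i : ℤ), j)
  · rw [hq, (h.sg_new _).2 rfl]
    simp [RX, hn]
  · simp only [RX, Set.mem_ofPred_eq, Set.mem_insert_iff, hq, false_or, if_false, hd]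
    refine and_congr_right fun hD => ?_
    rw [← and_congr_left_iff.2]
    intro _
    simp only [Diagram, Set.mem_ofPred_eq] at hD
    unfold sg
    grind

lemma Ctx.cT0 (h : Ctx d lam i j) (hf : (Diagram d lam).Finite) (B T : ℤ × ℤ → ℕ) (N : ℕ)
    (hT : ∀ p, T p = if p = ((i : ℤ), j) then N + 1 else B (sg i j p))
    (a : ℤ) (ha : 1 ≤ a) (hai : a < i) (hN : B (a, j + 1) ≤ N) :
    (SB d (stepShape lam i) T (a, j)).ncard = (RX d lam B a j (j + 1) (B (a, j + 1))).ncard + 1 +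
      if B (a, j + 1) < B (a, j) then 1 else 0 := by
  have h1 := h.hjp
  have h2 := h.hid
  have hm := h.memd a ha hai
  have hn := h.new_not
  have hv : T (a, j) = B (a, j + 1) := by
    rw [hT, if_neg (by simp; omega), sg0 _ _ _ ha hai]
  have key : ∀ q, q ∈ SB d (stepShape lam i) T (a, j) ↔ q = ((i : ℤ), j) ∨
      (q = (a, j + 1) ∧ B (a, j + 1) < B (a, j)) ∨
      q ∈ sg i j '' RX d lam B a j (j + 1) (B (a, j + 1)) := by
    rintro ⟨b, c⟩
    rw [mem_SB_pos T a _ (by omega) (by omega), mem_image_sg, h.diag_step, hv, hT]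
    have hd := h.sg_diag (b, c)
    have hdn := h.dn b
    by_cases hq : (b, c) = ((i : ℤ), j)
    · rw [hq]
      simp
      omega
    · by_cases hq' : (b, c) = (a, j + 1)
      · rw [hq', if_neg (by simp), sg1 _ _ _ ha hai]
        simp [RX, hm]
      · simp only [RX, Set.mem_ofPred_eq, Set.mem_insert_iff, hq, hq', false_or, if_false, hd,
          false_and]
        refine and_congr_right fun hD => ?_
        rw [← and_congr_left_iff.2]
        intro _
        simp only [Diagram, Set.mem_ofPred_eq] at hD
        simp only [Prod.mk.injEq] at hq hq'
        unfold sg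
        grind
  have hfin : (sg i j '' RX d lam B a j (j + 1) (B (a, j + 1))).Finite := (finRX hf _ _ _ _ _).image _
  rw [← Set.ncard_image_of_injective (RX d lam B a j (j + 1) (B (a, j + 1))) (sg_inj (i : ℤ) j)]
  have hnot : ((i : ℤ), j) ∉ sg i j '' RX d lam B a j (j + 1) (B (a, j + 1)) := by
    rw [mem_image_sg, (h.sg_new _).2 rfl]; exact fun h' => hn h'.1
  split_ifs with hlt
  · have : SB d (stepShape lam i) T (a, j) = insert ((i : ℤ), j) (insert (a, j + 1)
      (sg i j '' RX d lam B a j (j + 1) (B (a, j + 1)))) := by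
      ext q; rw [key]; simp only [Set.mem_insert_iff, hlt, and_true]
    rw [this, Set.ncard_insert_of_notMem _ (hfin.insert _), Set.ncard_insert_of_notMem _ hfin]
    · rw [mem_image_sg, sg1 _ _ _ ha hai]
      simp [RX]
    · rw [Set.mem_insert_iff, not_or]
      exact ⟨by simp, hnot⟩
  · have : SB d (stepShape lam i) T (a, j) = insert ((i : ℤ), j)
      (sg i j '' RX d lam B a j (j + 1) (B (a, j + 1))) := by
      ext q; rw [key]; simp only [Set.mem_insert_iff, hlt, and_false, false_or]
    rw [this, Set.ncard_insert_of_notMem hnot hfin]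

lemma Ctx.rx_le (h : Ctx d lam i j) (hf : (Diagram d lam).Finite) (B : ℤ × ℤ → ℕ)
    (a : ℤ) (ha : 1 ≤ a) (x y : ℕ) (hyx : y ≤ x)
    (ih : ∀ b : ℤ, a < b → b < i → B (b, j) < B (b, j + 1)) :
    (RX d lam B a j j x).ncard ≤ (RX d lam B a j (j + 1) y).ncard := by
  rw [← Set.ncard_image_of_injective _ (sg_inj (i : ℤ) j)]
  apply Set.ncard_le_ncard _ (finRX hf _ _ _ _ _)
  rintro _ ⟨⟨b, c⟩, ⟨hD, h2, h3⟩, rfl⟩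
  simp only at h2
  rcases h2 with h2 | ⟨rfl, h2⟩
  · have : sg i j (b, c) = (b, c) := h.fixed _ (by simp only; omega)
    rw [this]
    exact ⟨hD, Or.inl h2, by omega⟩
  · have hb : b < i := by
      by_contra hb
      have := h.dn b (by omega) hD.2.1
      have := hD.2.2.2
      simp only at this
      omega
    have := ih b h2 hb
    have hmd := (h.memd b (by omega) hb).2
    rw [sg0 _ _ _ (by omega) hb]
    exact ⟨hmd, Or.inr ⟨rfl, h2⟩, by omega⟩

/-- Downward induction. -/
lemma Ctx.lt_all (h : Ctx d lam i j) (hf : (Diagram d lam).Finite) (B : ℤ × ℤ → ℕ)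
    (hinj : Set.InjOn B (Diagram d lam))
    (H : ∀ a : ℤ, 1 ≤ a → a < i → B (a, j + 1) < B (a, j) →
      (RX d lam B a j (j + 1) (B (a, j + 1))).ncard < (RX d lam B a j j (B (a, j))).ncard) :
    ∀ a : ℤ, 1 ≤ a → a < i → B (a, j) < B (a, j + 1) := by
  have main : ∀ n : ℕ, ∀ a : ℤ, (i - a).toNat ≤ n → 1 ≤ a → a < i → B (a, j) < B (a, j + 1) := by
    intro n
    induction n with
    | zero => intro a h1 h2 h3; omega
    | succ n ih =>
      intro a h1 h2 h3
      have hm := h.memd a h2 h3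
      by_contra hlt
      have hne : B (a, j) ≠ B (a, j + 1) := fun e => by
        have := hinj hm.1 hm.2 e
        simp at this
      have := H a h2 h3 (by omega)
      have := h.rx_le hf B a h2 (B (a, j)) (B (a, j + 1)) (by omega)
        (fun b hb hb' => ih b (by omega) (by omega) hb')
      omega
  intro a
  exact main _ a le_rfl

lemma Ctx.bal (h : Ctx d lam i j) (B T : ℤ × ℤ → ℕ)
    (hT : ∀ p, T p = if p = ((i : ℤ), j) then sizeP d lam + 1 else B (sg i j p))
    (hB : B ((i : ℤ), j) = 0) :
    IsBalanced d lam B ↔ IsBalanced d (stepShape lam i) T := by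
  classical
  unfold IsBalanced
  rw [← h.fill B T hT hB]
  refine and_congr_right fun hF => ?_
  have hf : (Diagram d lam).Finite := hF.1.finite_iff_finite.2 (Set.finite_Icc _ _)
  have hN : ∀ p ∈ Diagram d lam, B p ≤ sizeP d lam := fun p hp => (hF.1.mapsTo hp).2
  have rk0 : ∀ a : ℤ, ∀ c : ℤ, 1 ≤ a → a < i → 0 ≤ c →
      rk d (stepShape lam i) a c = rk d lam a c ∧ rk d lam a c = (lam a.toNat : ℤ) - d + a - c := by
    intro a c ha hai hc
    unfold rk
    rw [step_val a ha, if_pos hc, if_pos hc, if_neg (by omega)]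
    exact ⟨rfl, rfl⟩
  have hjp := h.hjp
  change (∀ p ∈ Diagram d lam, ((SB d lam B p).ncard : ℤ) = rk d lam p.1 p.2 - 1) ↔
    (∀ p ∈ Diagram d (stepShape lam i), ((SB d (stepShape lam i) T p).ncard : ℤ) =
      rk d (stepShape lam i) p.1 p.2 - 1)
  constructor
  · intro H
    have hlt := h.lt_all hf B hF.1.injOn (fun a ha hai hl => by
      have hm := h.memd a ha hai
      have e0 := H _ hm.1
      have e1 := H _ hm.2
      rw [h.cB0 hf B a ha hai, if_neg (by omega), (rk0 a j ha hai (by omega)).2] at e0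
      rw [h.cB1 B a hai, (rk0 a (j + 1) ha hai (by omega)).2] at e1
      push_cast at e0 e1
      omega)
    intro p hp
    rw [h.diag_step, Set.mem_insert_iff] at hp
    rcases hp with rfl | hp
    · have : SB d (stepShape lam i) T ((i : ℤ), j) = ∅ := by
        ext ⟨b, c⟩
        rw [mem_SB_pos _ _ _ (by omega) (by have := h.hid; omega), h.diag_step]
        have h1 := h.dn b
        have h2 := h.dn i
        have h3 := h.hj
        simp only [Set.mem_insert_iff, Set.mem_empty_iff_false, iff_false, Diagram,
          Set.mem_ofPred_eq, Prod.mk.injEq]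
        rintro ⟨h4 | h4, h5 | h5, -⟩ <;> grind
      rw [this]
      have h3 := h.hj
      have h4 := h.hi1
      unfold rk
      rw [step_val _ (by simp only; omega), if_pos (by simp only; omega), if_pos rfl]
      simp only [Int.toNat_natCast, Set.ncard_empty]
      push_cast
      omega
    · by_cases hs : p.1 < i ∧ (p.2 = j ∨ p.2 = j + 1)
      · obtain ⟨a, c⟩ := p
        obtain ⟨hai, hc⟩ := hs
        have ha : 1 ≤ a := hp.1
        simp only at hai hc ⊢
        have hm := h.memd a ha hai
        have e0 := H _ hm.1
        have e1 := H _ hm.2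
        have hl := hlt a ha hai
        rw [h.cB0 hf B a ha hai, if_pos hl, (rk0 a j ha hai (by omega)).2] at e0
        rw [h.cB1 B a hai, (rk0 a (j + 1) ha hai (by omega)).2] at e1
        rcases hc with rfl | rfl
        · rw [h.cT0 hf B T _ hT a ha hai (hN _ hm.2), if_neg (by omega),
            (rk0 a _ ha hai (by omega)).1, (rk0 a _ ha hai (by omega)).2]
          push_cast at *
          omega
        · rw [h.cT1 B T _ hT a ha hai,
            (rk0 a _ ha hai (by omega)).1, (rk0 a _ ha hai (by omega)).2]
          push_cast at *
          omega
      · rw [h.count_gen B T _ hT hf p hp (hN p hp) hs, h.rk_gen p hp hs]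
        have := H p hp
        push_cast
        omega
  · intro H
    have H' : ∀ p ∈ Diagram d lam, ((SB d (stepShape lam i) T p).ncard : ℤ) =
      rk d (stepShape lam i) p.1 p.2 - 1 := fun p hp => H p (by
        rw [h.diag_step]; exact Or.inr hp)
    have hlt := h.lt_all hf B hF.1.injOn (fun a ha hai hl => by
      have hm := h.memd a ha hai
      have e0 := H' _ hm.1
      have e1 := H' _ hm.2
      rw [h.cT0 hf B T _ hT a ha hai (hN _ hm.2), if_pos hl, (rk0 a j ha hai (by omega)).1,
        (rk0 a j ha hai (by omega)).2] at e0
      rw [h.cT1 B T _ hT a ha hai, (rk0 a (j + 1) ha hai (by omega)).1,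
        (rk0 a (j + 1) ha hai (by omega)).2] at e1
      push_cast at e0 e1
      omega)
    intro p hp
    by_cases hs : p.1 < i ∧ (p.2 = j ∨ p.2 = j + 1)
    · obtain ⟨a, c⟩ := p
      obtain ⟨hai, hc⟩ := hs
      have ha : 1 ≤ a := hp.1
      simp only at hai hc ⊢
      have hm := h.memd a ha hai
      have e0 := H' _ hm.1
      have e1 := H' _ hm.2
      have hl := hlt a ha hai
      rw [h.cT0 hf B T _ hT a ha hai (hN _ hm.2), if_neg (by omega), (rk0 a j ha hai (by omega)).1,
        (rk0 a j ha hai (by omega)).2] at e0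
      rw [h.cT1 B T _ hT a ha hai, (rk0 a (j + 1) ha hai (by omega)).1,
        (rk0 a (j + 1) ha hai (by omega)).2] at e1
      rcases hc with rfl | rfl
      · rw [h.cB0 hf B a ha hai, if_pos hl, (rk0 a _ ha hai (by omega)).2]
        push_cast at *
        omega
      · rw [h.cB1 B a hai, (rk0 a _ ha hai (by omega)).2]
        push_cast at *
        omega
    · have := H' p hp
      rw [h.count_gen B T _ hT hf p hp (hN p hp) hs, h.rk_gen p hp hs] at this
      push_cast at this
      omega

/-- the box-adding map `f_i` is a bijection from `BS(λ)` onto the set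
of balanced tableaux of shape `λ^#` whose entry at the new box is `N + 1`. -/
theorem addBox_bijOn (d : ℕ) (hd : 1 ≤ d)
    (lam : ℕ → ℕ) (hlam : IsStrictPartition d lam)
    (i : ℕ) (hi1 : 1 ≤ i) (hid : i ≤ d)
    (hcond : i = 1 ∨ lam i + 3 ≤ lam (i - 1)) :
    Set.BijOn (addBox d lam i (sizeP d lam))
      {B : ℤ × ℤ → ℕ | IsBalanced d lam B}
      {T : ℤ × ℤ → ℕ | IsBalanced d (stepShape lam i) T ∧
        T ((i : ℤ), (lam i : ℤ) + (i : ℤ) - (d : ℤ)) = sizeP d lam + 1} := by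
  have h := mkCtx d lam hlam i hi1 hid hcond
  set j : ℤ := (lam i : ℤ) + i - d with hj
  have hA := fun B p => addBox_eq d lam i (sizeP d lam) j hj B p
  refine ⟨?_, ?_, ?_⟩
  · intro B hB
    refine ⟨(h.bal B _ (hA B) (hB.1.2 _ h.new_not)).1 hB, ?_⟩
    rw [hA]; simp
  · intro B hB C hC e
    funext p
    by_cases hp : p = ((i : ℤ), j)
    · rw [hp, hB.1.2 _ h.new_not, hC.1.2 _ h.new_not]
    · have h1 : sg i j p ≠ ((i : ℤ), j) := fun e => hp ((h.sg_new p).1 e)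
      have := congrFun e (sg i j p)
      rwa [hA, hA, if_neg h1, if_neg h1, sg_sg] at this
  · rintro T ⟨hT, hTn⟩
    let B : ℤ × ℤ → ℕ := fun p => if p = ((i : ℤ), j) then 0 else T (sg i j p)
    have hBT : addBox d lam i (sizeP d lam) B = T := by
      funext p
      rw [hA]
      by_cases hp : p = ((i : ℤ), j)
      · rw [if_pos hp, hp, hTn]
      · have h1 : sg i j p ≠ ((i : ℤ), j) := fun e => hp ((h.sg_new p).1 e)
        simp [B, hp, h1, sg_sg]
    refine ⟨B, ?_, hBT⟩
    refine (h.bal B _ (hA B) (by simp [B])).2 ?_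
    rw [hBT]; exact hT

end BST
end
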